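/- Let R be an Artinian positively graded algebra over a field k with char k != 2, and let M be a finitely generated graded R-module such that length_R(M) = length_R(R) and Tor_i^R(M, M) = 0 for every i > 0. Then M ≅ R. -/

import Mathlib

/-!
Write `H_X` for the Hilbert polynomial of a graded module `X`, and `r = dim_k R`. Lengths over `R` are
dimensions over `k`, so `dim M = r`.

The idea is to compute two graded traces on `M ⊗ M`, that of the identity and that of the swap. If
`M` had a finite graded free resolution, the vanishing of Tor would give
`H_R(T) H_{M ⊗ M}(T) = H_M(T)²` and `H_R(T²) tr(swap)(T) = H_R(T) H_M(T²)`. For a general `M` the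
resolution is infinite, but the identities survive because its terms move to higher and higher
degrees. Concretely, take a graded presentation `0 → N → F → M → 0` on a homogeneous `k`-basis of
`M`. The module `N` inherits Tor-independence by dimension shifting and starts in a strictly higher
degree, as `R_0 = k`. Tor-independence gives `F ⊗ F ⊇ N ⊗ F + F ⊗ N` with intersection `N ⊗ N` and
quotient `M ⊗ M`; counting dimensions and antisymmetric parts (`tensor_recursion`) shows that the
defects of the two identities for `M` and `N` agree up to sign (`defect_recursion`). Iterating, the
defects of `M` are divisible by every power of `T`, hence vanish.

At `T = 1` this reads `r dim (M ⊗ M) = r²` and `r tr(swap) = r²`. As `char k ≠ 2`, the dimension of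
the antisymmetric tensors is half the difference of the dimension and the trace, which is zero;
so the swap is the identity of `M ⊗ M` (`swap_eq_self`). Tensoring with `k` shows that `M` is cyclic
(`exists_span_eq_top_of_comm_eq_self`), and a surjection `R → M` between spaces of equal finite
dimension is an isomorphism.
-/

open CategoryTheory Limits DirectSum

universe u

set_option linter.unusedSectionVars false

/-! ### Vanishing of Tor by dimension shifting -/

section Homological

variable (R : Type u) [CommRing R]

/-- `TorVan R n A B` expresses `Tor_{n+1}(A, B) = 0` by dimension shifting along *all* flat covers of
`A`: for `n = 0`, tensoring `0 → ker φ → F → A → 0` with `B` stays exact on the left; for `n + 1`,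
the condition holds in degree `n` for every such kernel. Quantifying over all covers lets a cover
adapted to the grading be used later. -/
def TorVan : ℕ → ∀ (A B : Type u) [AddCommGroup A] [Module R A] [AddCommGroup B] [Module R B], Prop
  | 0, A, B, _, _, _, _ => ∀ (F : Type u) [AddCommGroup F] [Module R F] [Module.Flat R F]
      (φ : F →ₗ[R] A), Function.Surjective φ →
      Function.Injective ((LinearMap.ker φ).subtype.rTensor B)
  | n + 1, A, B, _, _, _, _ => ∀ (F : Type u) [AddCommGroup F] [Module R F] [Module.Flat R F]
      (φ : F →ₗ[R] A), Function.Surjective φ → TorVan n (LinearMap.ker φ) B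

variable {R}

private lemma exact_sub {F A : Type u} [AddCommGroup F] [Module R F] [AddCommGroup A] [Module R A]
    (φ : F →ₗ[R] A) : Function.Exact (LinearMap.ker φ).subtype φ := by
  intro x; simp

private lemma rl {A A' B B' : Type u} [AddCommGroup A] [Module R A] [AddCommGroup B] [Module R B]
    [AddCommGroup A'] [Module R A'] [AddCommGroup B'] [Module R B']
    (f : A →ₗ[R] A') (g : B →ₗ[R] B') (x : TensorProduct R A B) :
    f.rTensor B' (g.lTensor A x) = g.lTensor A' (f.rTensor B x) := by
  have h := LinearMap.rTensor_comp_lTensor (R := R) (f := f) (g := g)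
  have h' := LinearMap.lTensor_comp_rTensor (R := R) (f := f) (g := g)
  rw [← LinearMap.comp_apply, ← LinearMap.comp_apply, h, h']

lemma exists_flat_cover (A : Type u) [AddCommGroup A] [Module R A] :
    ∃ (G : Type u) (_ : AddCommGroup G) (_ : Module R G) (_ : Module.Flat R G) (p : G →ₗ[R] A),
      Function.Surjective p :=
  ⟨A →₀ R, inferInstance, inferInstance, inferInstance, Finsupp.linearCombination R id,
    Finsupp.linearCombination_id_surjective R A⟩

/-- If a flat resolution of `B` stays exact in positive degrees after tensoring with `A`, then all
`TorVan R n A B` hold. The auxiliary `key` is the diagram chase comparing the resolution tensored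
with `ker φ`, `F` and `A`. -/
lemma torVan_of_resolution {B : Type u} [AddCommGroup B] [Module R B]
    (P : ℕ → Type u) [∀ n, AddCommGroup (P n)] [∀ n, Module R (P n)] [∀ n, Module.Flat R (P n)]
    (d : ∀ n, P (n + 1) →ₗ[R] P n) (ε : P 0 →ₗ[R] B) (hε : Function.Surjective ε)
    (hd0 : Function.Exact (d 0) ε) (hd : ∀ n, Function.Exact (d (n + 1)) (d n)) (n : ℕ) :
    ∀ (A : Type u) [AddCommGroup A] [Module R A]
      (_ : ∀ i, Function.Exact ((d (i + 1)).lTensor A) ((d i).lTensor A)), TorVan R n A B := by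
  have key : ∀ (A : Type u) [AddCommGroup A] [Module R A]
      (_ : ∀ i, Function.Exact ((d (i + 1)).lTensor A) ((d i).lTensor A))
      (F : Type u) [AddCommGroup F] [Module R F] [Module.Flat R F]
      (φ : F →ₗ[R] A) (_ : Function.Surjective φ) (i : ℕ)
      (y : TensorProduct R (LinearMap.ker φ) (P i)) (w : TensorProduct R F (P (i + 1)))
      (_ : (d i).lTensor F w = (LinearMap.ker φ).subtype.rTensor (P i) y),
      ∃ x, (d i).lTensor _ x = y := by
    intro A _ _ hA F _ _ _ φ hφ i y w hw
    have h1 : (d i).lTensor A (φ.rTensor _ w) = 0 := by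
      rw [← rl, hw]
      exact (rTensor_exact (P i) (exact_sub φ) hφ).apply_apply_eq_zero y
    obtain ⟨v', hv'⟩ := (hA i _).1 h1
    obtain ⟨v, rfl⟩ := LinearMap.rTensor_surjective (P (i + 2)) hφ v'
    have h2 : φ.rTensor _ (w - (d (i + 1)).lTensor F v) = 0 := by
      rw [map_sub, rl, hv', sub_self]
    obtain ⟨x, hx⟩ := (rTensor_exact (P (i + 1)) (exact_sub φ) hφ _).1 h2
    refine ⟨x, ?_⟩
    apply Module.Flat.rTensor_preserves_injective_linearMap (M := P i) _
      (LinearMap.ker φ).injective_subtype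
    rw [rl, hx, map_sub, hw, (Module.Flat.lTensor_exact F (hd i)).apply_apply_eq_zero, sub_zero]
  induction n with
  | zero =>
    intro A _ _ hA F _ _ _ φ hφ
    rw [injective_iff_map_eq_zero]
    intro x hx
    obtain ⟨y, rfl⟩ := LinearMap.lTensor_surjective (LinearMap.ker φ) hε x
    rw [rl] at hx
    obtain ⟨w, hw⟩ := (lTensor_exact F hd0 hε _).1 hx
    obtain ⟨z, rfl⟩ := key A hA F φ hφ 0 y w hw
    exact (lTensor_exact (LinearMap.ker φ) hd0 hε).apply_apply_eq_zero z
  | succ n ih =>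
    intro A _ _ hA F _ _ _ φ hφ
    apply ih
    intro i y
    constructor
    · intro hy
      have h1 : (d i).lTensor F ((LinearMap.ker φ).subtype.rTensor _ y) = 0 := by
        rw [← rl, hy, map_zero]
      obtain ⟨w, hw⟩ := (Module.Flat.lTensor_exact F (hd i) _).1 h1
      exact key A hA F φ hφ (i + 1) y w hw
    · rintro ⟨x, rfl⟩
      rw [← LinearMap.comp_apply, ← LinearMap.lTensor_comp, (hd i).linearMap_comp_eq_zero]
      simp

/-- Dimension shifting in the second variable: `Tor_{n+2}(A, B) = 0` gives `Tor_{n+1}(A, ker ψ) = 0`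
for a flat cover `ψ` of `B`. In degree `0` this is a form of the balancing of Tor. -/
lemma torVan_syzygy_right {B P : Type u} [AddCommGroup B] [Module R B] [AddCommGroup P]
    [Module R P] [Module.Flat R P] (ψ : P →ₗ[R] B) (hψ : Function.Surjective ψ) (n : ℕ) :
    ∀ (A : Type u) [AddCommGroup A] [Module R A], TorVan R (n + 1) A B →
      TorVan R n A (LinearMap.ker ψ) := by
  induction n with
  | zero =>
    intro A _ _ h F _ _ _ φ hφ
    set N := LinearMap.ker φ
    set K := LinearMap.ker ψ
    have h1 : Function.Injective (K.subtype.lTensor N) := by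
      rw [injective_iff_map_eq_zero]
      intro x hx
      obtain ⟨G, _, _, _, p, hp⟩ := exists_flat_cover (R := R) N
      have hT := h F φ hφ G p hp
      obtain ⟨y, rfl⟩ := LinearMap.rTensor_surjective K hp x
      rw [← rl] at hx
      have hex := rTensor_exact P (exact_sub p) hp
      obtain ⟨w, hw⟩ := (hex _).1 hx
      have hw0 : ψ.lTensor _ w = 0 := by
        apply hT
        rw [rl, hw, map_zero]
        exact (lTensor_exact _ (exact_sub ψ) hψ).apply_apply_eq_zero y
      obtain ⟨v, rfl⟩ := (lTensor_exact _ (exact_sub ψ) hψ _).1 hw0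
      rw [rl] at hw
      have := Module.Flat.lTensor_preserves_injective_linearMap (M := G) _
        K.injective_subtype hw
      rw [← this]
      exact (rTensor_exact K (exact_sub p) hp).apply_apply_eq_zero v
    have h2 := (Module.Flat.rTensor_preserves_injective_linearMap (M := P) _
      N.injective_subtype).comp h1
    intro x y hxy
    apply h2
    simp only [Function.comp_apply]
    rw [rl, hxy, rl]
  | succ n ih =>
    intro A _ _ h F _ _ _ φ hφ
    exact ih _ (h F φ hφ)

/-- Vanishing of the higher derived functors implies every `TorVan`; the resolution is the chosen
projective resolution of `B`, with `A ⊗ -` applied to it. -/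
lemma torVan_of_isZero_Tor {A B : Type u} [AddCommGroup A] [Module R A] [AddCommGroup B]
    [Module R B] (h : ∀ i : ℕ, 0 < i →
      IsZero (((Tor (ModuleCat.{u} R) i).obj (ModuleCat.of R A)).obj (ModuleCat.of R B))) (n : ℕ) :
    TorVan R n A B := by
  let P : ProjectiveResolution (ModuleCat.of R B) := projectiveResolution _
  have hfl : ∀ n, Module.Flat R (P.complex.X n) := fun n => by
    have : Module.Projective R (P.complex.X n) :=
      (IsProjective.iff_projective _).2 (P.projective n)
    infer_instance
  have hP : ∀ i, Function.Exact (P.complex.d (i + 1 + 1) (i + 1)).hom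
      (P.complex.d (i + 1) i).hom := by
    intro i
    have := P.complex_exactAt_succ i
    rw [HomologicalComplex.exactAt_iff' _ (i + 1 + 1) (i + 1) i (by simp) (by simp)] at this
    exact (ShortComplex.ShortExact.moduleCat_exact_iff_function_exact _).1 this
  have hA : ∀ i, Function.Exact ((P.complex.d (i + 1 + 1) (i + 1)).hom.lTensor A)
      ((P.complex.d (i + 1) i).hom.lTensor A) := by
    intro i
    have h1 : IsZero (((((MonoidalCategory.tensoringLeft (ModuleCat.{u} R)).obj
        (ModuleCat.of R A)).mapHomologicalComplex _).obj P.complex).homology (i + 1)) :=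
      IsZero.of_iso (h (i + 1) i.succ_pos) (P.isoLeftDerivedObj
        ((MonoidalCategory.tensoringLeft (ModuleCat.{u} R)).obj (ModuleCat.of R A)) (i + 1)).symm
    rw [← HomologicalComplex.exactAt_iff_isZero_homology,
      HomologicalComplex.exactAt_iff' _ (i + 1 + 1) (i + 1) i (by simp) (by simp)] at h1
    exact (ShortComplex.ShortExact.moduleCat_exact_iff_function_exact _).1 h1
  have h0 := (ShortComplex.ShortExact.moduleCat_exact_iff_function_exact _).1 P.exact₀
  have hs : Function.Surjective (P.π.f 0).hom := (ModuleCat.epi_iff_surjective _).1 inferInstance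
  exact torVan_of_resolution (fun n => P.complex.X n) (fun n => (P.complex.d (n + 1) n).hom)
    (P.π.f 0).hom hs h0 hP n A hA

end Homological

/-! ### Linear algebra of an involution -/

section LinearAlgebra

variable {k : Type*} [Field k]

/-- The dimension of the `(-1)`-eigenspace of `τ`; for the swap on a tensor square, the dimension of
the antisymmetric tensors. -/
noncomputable def antiDim {V : Type*} [AddCommGroup V] [Module k V] (τ : V →ₗ[k] V) : ℕ :=
  Module.finrank k (LinearMap.ker (τ + LinearMap.id))

/-- Inclusion-exclusion for `V / (A + τ A)` with `W = A ∩ τ A`; here `V = F ⊗ F`, `A = N ⊗ F`,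
`W = N ⊗ N` and `Q = M ⊗ M` in the application. -/
lemma dim_quotient_sup {V W Q A : Type*} [AddCommGroup V] [Module k V] [AddCommGroup W] [Module k W]
    [AddCommGroup Q] [Module k Q] [AddCommGroup A] [Module k A] [FiniteDimensional k V]
    (τ : V →ₗ[k] V) (hτ : ∀ x, τ (τ x) = x)
    (j : A →ₗ[k] V) (hj : Function.Injective j) (f : W →ₗ[k] V) (hf : Function.Injective f)
    (g : V →ₗ[k] Q) (hg : Function.Surjective g)
    (hfr : ∀ x, (∃ w, f w = x) ↔ (∃ a, j a = x) ∧ ∃ b, τ (j b) = x)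
    (hgk : ∀ x, g x = 0 ↔ ∃ a b, j a + τ (j b) = x) :
    Module.finrank k Q + 2 * Module.finrank k A = Module.finrank k V + Module.finrank k W := by
  have hτi : Function.Injective τ := Function.LeftInverse.injective hτ
  have h1 := LinearMap.finrank_range_add_finrank_ker g
  rw [LinearMap.range_eq_top.2 hg, finrank_top] at h1
  have h2 : LinearMap.ker g = LinearMap.range j ⊔ LinearMap.range (τ ∘ₗ j) := by
    ext x
    simp only [LinearMap.mem_ker, hgk, Submodule.mem_sup, LinearMap.mem_range,
      exists_exists_eq_and, LinearMap.comp_apply]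
  have h3 : LinearMap.range f = LinearMap.range j ⊓ LinearMap.range (τ ∘ₗ j) := by
    ext x
    simpa using hfr x
  have hcomp : Module.finrank k (LinearMap.range (τ ∘ₗ j)) = Module.finrank k A :=
    LinearMap.finrank_range_of_inj (by rw [LinearMap.coe_comp]; exact hτi.comp hj)
  have h4 := Submodule.finrank_sup_add_finrank_inf_eq (LinearMap.range j) (LinearMap.range (τ ∘ₗ j))
  rw [← h2, ← h3, LinearMap.finrank_range_of_inj hf, LinearMap.finrank_range_of_inj hj,
    hcomp] at h4
  omega

private lemma half_add_half (h2 : (2 : k) ≠ 0) {X : Type*} [AddCommGroup X] [Module k X] (x : X) :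
    (2⁻¹ : k) • x + (2⁻¹ : k) • x = x := by
  rw [← add_smul, ← two_mul, mul_inv_cancel₀ h2, one_smul]

/-- The count of antisymmetric parts matching `dim_quotient_sup`: the antisymmetric part of `A + τ A`
is `{a - τ a}`, a quotient of `A` by the symmetric part of `W`. -/
lemma antiDim_quotient_sup (h2 : (2 : k) ≠ 0) {V W Q A : Type*} [AddCommGroup V] [Module k V]
    [AddCommGroup W] [Module k W]
    [AddCommGroup Q] [Module k Q] [AddCommGroup A] [Module k A] [FiniteDimensional k V]
    (τ : V →ₗ[k] V) (hτ : ∀ x, τ (τ x) = x) (τW : W →ₗ[k] W) (hτW : ∀ x, τW (τW x) = x)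
    (τQ : Q →ₗ[k] Q)
    (j : A →ₗ[k] V) (hj : Function.Injective j) (f : W →ₗ[k] V) (hf : Function.Injective f)
    (g : V →ₗ[k] Q) (hg : Function.Surjective g)
    (hfτ : ∀ w, f (τW w) = τ (f w)) (hgτ : ∀ v, g (τ v) = τQ (g v))
    (hfr : ∀ x, (∃ w, f w = x) ↔ (∃ a, j a = x) ∧ ∃ b, τ (j b) = x)
    (hgk : ∀ x, g x = 0 ↔ ∃ a b, j a + τ (j b) = x) :
    antiDim τQ + Module.finrank k A + antiDim τW = antiDim τ + Module.finrank k W := by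
  have : FiniteDimensional k W := Module.Finite.of_injective f hf
  have : FiniteDimensional k A := Module.Finite.of_injective j hj
  -- the antisymmetric part of `Q` is the image of the antisymmetric part of `V`
  have e1 : antiDim τ = antiDim τQ
      + Module.finrank k (LinearMap.ker (τ + LinearMap.id) ⊓ LinearMap.ker g : Submodule k V) := by
    have hm : (LinearMap.ker (τ + LinearMap.id)).map g = LinearMap.ker (τQ + LinearMap.id) := by
      ext y
      simp only [Submodule.mem_map, LinearMap.mem_ker, LinearMap.add_apply, LinearMap.id_apply]
      constructor
      · rintro ⟨x, hx, rfl⟩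
        rw [← hgτ, ← map_add, hx, map_zero]
      · intro hy
        obtain ⟨x, rfl⟩ := hg y
        refine ⟨(2⁻¹ : k) • (x - τ x), ?_, ?_⟩
        · rw [map_smul, ← smul_add, map_sub, hτ]; simp
        · have hy' : τQ (g x) = -g x := eq_neg_of_add_eq_zero_left hy
          rw [map_smul, map_sub, hgτ, hy', sub_neg_eq_add, smul_add, half_add_half h2]
    have := LinearMap.finrank_range_add_finrank_ker (g.domRestrict (LinearMap.ker (τ + LinearMap.id)))
    rw [LinearMap.range_domRestrict, hm, LinearMap.ker_domRestrict] at this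
    rw [antiDim, antiDim, ← this, ← Submodule.finrank_map_subtype_eq, Submodule.map_comap_subtype]
  -- `a ↦ j a - τ (j a)` maps `A` onto the antisymmetric part of `ker g`
  have e2 : Module.finrank k A =
      Module.finrank k (LinearMap.ker (τ + LinearMap.id) ⊓ LinearMap.ker g : Submodule k V)
      + Module.finrank k (LinearMap.ker (τW - LinearMap.id)) := by
    have h := LinearMap.finrank_range_add_finrank_ker (j - τ ∘ₗ j)
    have hr : LinearMap.range (j - τ ∘ₗ j) = LinearMap.ker (τ + LinearMap.id) ⊓ LinearMap.ker g := by
      ext x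
      simp only [LinearMap.mem_range, Submodule.mem_inf, LinearMap.mem_ker, LinearMap.add_apply,
        LinearMap.id_apply, LinearMap.sub_apply, LinearMap.comp_apply]
      constructor
      · rintro ⟨a, rfl⟩
        refine ⟨by rw [map_sub, hτ]; abel, (hgk _).2 ⟨a, -a, by simp [sub_eq_add_neg]⟩⟩
      · rintro ⟨hx, hx'⟩
        obtain ⟨a, b, hab⟩ := (hgk _).1 hx'
        refine ⟨(2⁻¹ : k) • (a - b), ?_⟩
        have hx2 : τ x = -x := eq_neg_of_add_eq_zero_left hx
        have : j a - j b - (τ (j a) - τ (j b)) = x + x := by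
          have h3 : x - τ x = x + x := by rw [hx2]; abel
          rw [← h3, ← hab, map_add, hτ]; abel
        rw [map_smul, map_smul, map_sub, map_sub, ← smul_sub, this, smul_add, half_add_half h2]
    have hk : (LinearMap.ker (j - τ ∘ₗ j)).map j = (LinearMap.ker (τW - LinearMap.id)).map f := by
      ext x
      simp only [Submodule.mem_map, LinearMap.mem_ker, LinearMap.sub_apply, LinearMap.id_apply,
        LinearMap.comp_apply, sub_eq_zero]
      constructor
      · rintro ⟨a, ha, rfl⟩
        obtain ⟨w, hw⟩ := (hfr (j a)).2 ⟨⟨a, rfl⟩, ⟨a, ha.symm⟩⟩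
        refine ⟨w, hf ?_, hw⟩
        rw [hfτ, hw, ← ha]
      · rintro ⟨w, hw, rfl⟩
        obtain ⟨⟨a, ha⟩, -⟩ := (hfr (f w)).1 ⟨w, rfl⟩
        refine ⟨a, ?_, ha⟩
        rw [ha, ← hfτ, hw]
    have h5 : Module.finrank k (LinearMap.ker (j - τ ∘ₗ j)) =
        Module.finrank k (LinearMap.ker (τW - LinearMap.id)) := by
      rw [(Submodule.equivMapOfInjective j hj _).finrank_eq, hk,
        (Submodule.equivMapOfInjective f hf _).finrank_eq]
    rw [hr, h5] at h
    exact h.symm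
  have e3 : Module.finrank k W = Module.finrank k (LinearMap.ker (τW - LinearMap.id))
      + antiDim τW := by
    have h := LinearMap.finrank_range_add_finrank_ker (τW - LinearMap.id)
    have hr : LinearMap.range (τW - LinearMap.id) = LinearMap.ker (τW + LinearMap.id) := by
      ext x
      simp only [LinearMap.mem_range, LinearMap.mem_ker, LinearMap.add_apply,
        LinearMap.id_apply, LinearMap.sub_apply]
      constructor
      · rintro ⟨a, rfl⟩
        rw [map_sub, hτW]; abel
      · intro hx
        refine ⟨-((2⁻¹ : k) • x), ?_⟩
        rw [map_neg, map_smul, eq_neg_of_add_eq_zero_left hx, smul_neg, neg_neg, sub_neg_eq_add,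
          half_add_half h2]
    rw [hr] at h
    rw [antiDim, ← h, add_comm]
  omega

end LinearAlgebra

/-! ### Gradings by projections -/

section Graded

open Finset TensorProduct

variable {k : Type*} [Field k]

/-- A grading of the `k`-space `X` by finitely many natural degrees, presented by its projections `π n`
onto the homogeneous components; components in degrees at least `D` vanish. Recording projections
instead of submodules makes tensor products and kernels easy to grade. -/
structure Gr (k : Type*) [Field k] (X : Type*) [AddCommGroup X] [Module k X] where
  π : ℕ → X →ₗ[k] X
  D : ℕ
  π_eq_zero : ∀ n, D ≤ n → π n = 0
  sum_π : ∀ x, ∑ n ∈ range D, π n x = x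
  π_π : ∀ m n x, π m (π n x) = if m = n then π n x else 0

namespace Gr

section basic

variable {X Y Z : Type*} [AddCommGroup X] [Module k X] [AddCommGroup Y] [Module k Y]
  [AddCommGroup Z] [Module k Z]

/-- The homogeneous component of degree `n`. -/
def comp (g : Gr k X) (n : ℕ) : Submodule k X := LinearMap.range (g.π n)

lemma mem_comp {g : Gr k X} {n : ℕ} {x : X} : x ∈ g.comp n ↔ g.π n x = x := by
  constructor
  · rintro ⟨y, rfl⟩
    rw [g.π_π, if_pos rfl]
  · intro h
    exact ⟨x, h⟩

lemma π_mem (g : Gr k X) (n : ℕ) (x : X) : g.π n x ∈ g.comp n := ⟨x, rfl⟩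

lemma comp_eq_bot (g : Gr k X) {n : ℕ} (h : g.D ≤ n) : g.comp n = ⊥ := by
  rw [comp, g.π_eq_zero n h, LinearMap.range_zero]

lemma π_of_mem_ne {g : Gr k X} {m n : ℕ} {x : X} (h : x ∈ g.comp n) (hne : m ≠ n) :
    g.π m x = 0 := by
  rw [← mem_comp.1 h, g.π_π, if_neg hne]

lemma sum_π_of_le (g : Gr k X) {E : ℕ} (h : g.D ≤ E) (x : X) : ∑ n ∈ range E, g.π n x = x := by
  rw [← sum_subset (range_subset_range.2 h), g.sum_π]
  intro n _ hn
  rw [g.π_eq_zero n (by simpa using hn), LinearMap.zero_apply]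

/-- The Hilbert polynomial `∑ (dim X_n) T^n`. -/
noncomputable def H (g : Gr k X) : Polynomial ℤ :=
  ∑ n ∈ range g.D, Polynomial.monomial n (Module.finrank k (g.comp n) : ℤ)

lemma coeff_H (g : Gr k X) (n : ℕ) : g.H.coeff n = Module.finrank k (g.comp n) := by
  simp only [H, Polynomial.finsetSum_coeff, Polynomial.coeff_monomial, sum_ite_eq', mem_range]
  split_ifs with h
  · rfl
  · rw [g.comp_eq_bot (not_lt.1 h)]; simp

/-- The map `f` is homogeneous of degree `0`. -/
def IsGraded (g : Gr k X) (g' : Gr k Y) (f : X →ₗ[k] Y) : Prop :=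
  ∀ n x, f (g.π n x) = g'.π n (f x)

variable {g : Gr k X} {g' : Gr k Y} {g'' : Gr k Z}

lemma IsGraded.map_mem {f : X →ₗ[k] Y} (hf : IsGraded g g' f) {n : ℕ} {x : X}
    (hx : x ∈ g.comp n) : f x ∈ g'.comp n := by
  rw [mem_comp, ← hf, mem_comp.1 hx]

/-- The degree `n` part of a graded map. -/
def IsGraded.res {f : X →ₗ[k] Y} (hf : IsGraded g g' f) (n : ℕ) : g.comp n →ₗ[k] g'.comp n :=
  f.restrict fun _ => hf.map_mem

lemma IsGraded.coe_res {f : X →ₗ[k] Y} (hf : IsGraded g g' f) (n : ℕ) (x : g.comp n) :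
    (hf.res n x : Y) = f x := rfl

lemma IsGraded.res_injective {f : X →ₗ[k] Y} (hf : IsGraded g g' f) (h : Function.Injective f)
    (n : ℕ) : Function.Injective (hf.res n) := fun _ _ hxy =>
  Subtype.ext (h (congrArg Subtype.val hxy))

lemma IsGraded.res_surjective {f : X →ₗ[k] Y} (hf : IsGraded g g' f) (h : Function.Surjective f)
    (n : ℕ) : Function.Surjective (hf.res n) := by
  rintro ⟨y, hy⟩
  obtain ⟨x, rfl⟩ := h y
  refine ⟨⟨g.π n x, g.π_mem n x⟩, Subtype.ext ?_⟩
  rw [coe_res, hf, mem_comp.1 hy]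

lemma IsGraded.finrank_eq {f : X →ₗ[k] Y} (hf : IsGraded g g' f) (h : Function.Bijective f)
    (n : ℕ) : Module.finrank k (g.comp n) = Module.finrank k (g'.comp n) :=
  (LinearEquiv.ofBijective (hf.res n) ⟨hf.res_injective h.1 n, hf.res_surjective h.2 n⟩).finrank_eq

lemma IsGraded.finrank_add {f : X →ₗ[k] Y} {e : Y →ₗ[k] Z} [FiniteDimensional k Y]
    (hf : IsGraded g g' f) (he : IsGraded g' g'' e)
    (hfi : Function.Injective f) (hes : Function.Surjective e) (hex : Function.Exact f e) (n : ℕ) :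
    Module.finrank k (g'.comp n) = Module.finrank k (g.comp n) + Module.finrank k (g''.comp n) := by
  have h1 := LinearMap.finrank_range_add_finrank_ker (he.res n)
  have h2 : LinearMap.ker (he.res n) = LinearMap.range (hf.res n) := by
    ext ⟨y, hy⟩
    simp only [LinearMap.mem_ker, LinearMap.mem_range, Subtype.ext_iff, coe_res, ZeroMemClass.coe_zero]
    rw [hex y]
    constructor
    · rintro ⟨x, rfl⟩
      exact ⟨⟨_, g.π_mem n x⟩, by rw [hf, mem_comp.1 hy]⟩
    · rintro ⟨x, rfl⟩
      exact ⟨x, rfl⟩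
  rw [LinearMap.range_eq_top.2 (he.res_surjective hes n), finrank_top, h2,
    LinearMap.finrank_range_of_inj (hf.res_injective hfi n)] at h1
  omega

/-- The space `X` as the product of its homogeneous components. -/
noncomputable def decompEquiv (g : Gr k X) : X ≃ₗ[k] (∀ n : Fin g.D, g.comp n) :=
  { toFun := fun x n => ⟨g.π n x, g.π_mem n x⟩
    map_add' := fun x y => by ext; simp
    map_smul' := fun c x => by ext; simp
    invFun := fun y => ∑ n, (y n : X)
    left_inv := fun x => by
      have := g.sum_π x
      rwa [← Fin.sum_univ_eq_sum_range (fun n => g.π n x)] at this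
    right_inv := fun y => by
      ext n
      change g.π n (∑ m, (y m : X)) = y n
      rw [map_sum, sum_eq_single n]
      · exact mem_comp.1 (y n).2
      · intro m _ hm
        exact π_of_mem_ne (y m).2 fun h => hm (Fin.ext h.symm)
      · simp }

lemma decompEquiv_symm_apply (g : Gr k X) (y : ∀ n : Fin g.D, g.comp n) :
    g.decompEquiv.symm y = ∑ n, (y n : X) := rfl

lemma eval_one_H [FiniteDimensional k X] (g : Gr k X) :
    g.H.eval 1 = Module.finrank k X := by
  rw [g.decompEquiv.finrank_eq, Module.finrank_pi_fintype, H, Polynomial.eval_finsetSum]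
  simp only [Polynomial.eval_monomial, one_pow, mul_one]
  rw [← Fin.sum_univ_eq_sum_range (fun n => (Module.finrank k (g.comp n) : ℤ))]
  push_cast
  rfl

lemma exists_homogeneous_basis (g : Gr k X) [FiniteDimensional k X] :
    ∃ (m : ℕ) (b : Module.Basis (Fin m) k X) (d : Fin m → ℕ), ∀ i, b i ∈ g.comp (d i) := by
  let b := (Pi.basis fun n : Fin g.D => Module.finBasis k (g.comp n)).map g.decompEquiv.symm
  let e := Fintype.equivFin (Σ n : Fin g.D, Fin (Module.finrank k (g.comp n)))
  refine ⟨_, b.reindex e, fun i => (e.symm i).1, fun i => ?_⟩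
  rw [Module.Basis.reindex_apply, Module.Basis.map_apply, decompEquiv_symm_apply,
    sum_eq_single (e.symm i).1]
  · exact Subtype.prop _
  · intro n _ hn
    rw [Pi.basis_apply, Pi.single_eq_of_ne hn]; rfl
  · simp

/-- The grading on `ι → X` in which the `i`-th copy of `X` is shifted up by `d i`. -/
def shift {ι : Type*} [Fintype ι] (g : Gr k X) (d : ι → ℕ) : Gr k (ι → X) where
  π n := LinearMap.pi fun i => if d i ≤ n then g.π (n - d i) ∘ₗ LinearMap.proj i else 0
  D := ∑ i, d i + g.D
  π_eq_zero n hn := by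
    ext f i
    have hi : d i ≤ ∑ i, d i := single_le_sum (fun _ _ => Nat.zero_le _) (mem_univ i)
    rw [LinearMap.pi_apply]
    split_ifs
    · rw [g.π_eq_zero _ (by omega)]; rfl
    · rfl
  sum_π f := by
    ext i
    have hi : d i ≤ ∑ i, d i := single_le_sum (fun _ _ => Nat.zero_le _) (mem_univ i)
    obtain ⟨e, he⟩ := Nat.exists_eq_add_of_le hi
    rw [Finset.sum_apply, he, add_assoc, sum_range_add]
    simp only [LinearMap.pi_apply]
    rw [sum_eq_zero, zero_add]
    · simp only [le_add_iff_nonneg_right, zero_le, if_true, Nat.add_sub_cancel_left]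
      exact g.sum_π_of_le (by omega) (f i)
    · intro n hn
      rw [if_neg (by simpa using hn)]; rfl
  π_π m n f := by
    ext i
    simp only [LinearMap.pi_apply]
    by_cases h1 : d i ≤ m <;> by_cases h2 : d i ≤ n <;> by_cases h : m = n
    all_goals simp [h1, h2, h, g.π_π]
    all_goals try omega

lemma shift_π {ι : Type*} [Fintype ι] (g : Gr k X) (d : ι → ℕ) (n : ℕ) (f : ι → X) (i : ι) :
    (g.shift d).π n f i = if d i ≤ n then g.π (n - d i) (f i) else 0 := by
  simp only [shift, LinearMap.pi_apply]
  split_ifs <;> rfl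

end basic

section tensor

variable {R : Type*} [CommRing R] [Algebra k R]
variable {X Y X' Y' : Type*} [AddCommGroup X] [Module R X] [Module k X] [IsScalarTower k R X]
  [AddCommGroup Y] [Module R Y] [Module k Y] [IsScalarTower k R Y]
  [AddCommGroup X'] [Module R X'] [Module k X'] [IsScalarTower k R X']
  [AddCommGroup Y'] [Module R Y'] [Module k Y'] [IsScalarTower k R Y']

/-- Compatibility of the gradings of `R` and of an `R`-module `X`, expressed on projections:
`(r x)_n = ∑_{i + j = n} r_i x_j`. For `X = R` it says that `R` is a graded ring. -/
def Compat (gR : Gr k R) (g : Gr k X) : Prop :=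
  ∀ n r x, g.π n (r • x) = ∑ p ∈ antidiagonal n, gR.π p.1 r • g.π p.2 x

lemma sum_antidiagonal_assoc {M : Type*} [AddCommMonoid M] (n : ℕ) (f : ℕ → ℕ → ℕ → M) :
    ∑ p ∈ antidiagonal n, ∑ q ∈ antidiagonal p.1, f q.1 q.2 p.2 =
      ∑ p ∈ antidiagonal n, ∑ q ∈ antidiagonal p.2, f p.1 q.1 q.2 := by
  rw [sum_sigma', sum_sigma']
  refine sum_nbij' (fun x => ⟨(x.2.1, x.2.2 + x.1.2), (x.2.2, x.1.2)⟩)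
    (fun x => ⟨(x.1.1 + x.2.1, x.2.2), (x.1.1, x.2.1)⟩) ?_ ?_ ?_ ?_ ?_
  all_goals rintro ⟨⟨a, b⟩, ⟨c, d⟩⟩ h
  all_goals simp only [mem_sigma, HasAntidiagonal.mem_antidiagonal] at h ⊢
  all_goals obtain ⟨h1, h2⟩ := h
  all_goals subst h1
  all_goals subst h2
  all_goals simp [add_assoc]

variable {gR : Gr k R} {g : Gr k X} {g' : Gr k Y}

/-- The projection `x ⊗ y ↦ ∑_{i + j = n} x_i ⊗ y_j` on `X ⊗[R] Y`. Compatibility of the gradings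
makes it balanced over `R`. -/
noncomputable def tensorAux (hg : Compat gR g) (hg' : Compat gR g') (n : ℕ) :
    X ⊗[R] Y →+ X ⊗[R] Y :=
  TensorProduct.liftAddHom
    (AddMonoidHom.mk' (fun x => AddMonoidHom.mk'
      (fun y => ∑ p ∈ antidiagonal n, g.π p.1 x ⊗ₜ[R] g'.π p.2 y)
      (fun y y' => by simp [tmul_add, sum_add_distrib]))
      (fun x x' => by ext y; simp [add_tmul, sum_add_distrib]))
    (fun r x y => by
      have hc : ∀ p ∈ antidiagonal n, g.π p.1 (r • x) ⊗ₜ[R] g'.π p.2 y =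
          ∑ q ∈ antidiagonal p.1, g.π q.2 x ⊗ₜ[R] (gR.π q.1 r • g'.π p.2 y) := by
        intro p _
        rw [hg, sum_tmul]
        simp only [tmul_smul, smul_tmul']
      have hc' : ∀ p ∈ antidiagonal n, g.π p.1 x ⊗ₜ[R] g'.π p.2 (r • y) =
          ∑ q ∈ antidiagonal p.2, g.π p.1 x ⊗ₜ[R] (gR.π q.1 r • g'.π q.2 y) := by
        intro p _
        rw [hg', tmul_sum]
      simp only [AddMonoidHom.mk'_apply]
      rw [sum_congr rfl hc, sum_congr rfl hc',
        ← sum_antidiagonal_assoc n fun a b c => g.π a x ⊗ₜ[R] (gR.π b r • g'.π c y)]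
      refine sum_congr rfl fun p _ => ?_
      rw [← Nat.sum_antidiagonal_swap]
      rfl)

/-- The total grading on `X ⊗[R] Y`. -/
noncomputable def tensor (hg : Compat gR g) (hg' : Compat gR g') : Gr k (X ⊗[R] Y) where
  π n :=
    { tensorAux hg hg' n with
      map_smul' := fun c z => by
        simp only [ZeroHom.toFun_eq_coe, AddMonoidHom.toZeroHom_coe, RingHom.id_apply]
        induction z with
        | zero => simp
        | add z w hz hw => rw [smul_add, map_add, hz, hw, map_add, smul_add]
        | tmul x y =>
          rw [smul_tmul']
          simp [tensorAux, smul_sum, smul_tmul'] }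
  D := g.D + g'.D
  π_eq_zero n hn := by
    ext z
    change tensorAux hg hg' n z = 0
    induction z with
    | zero => simp
    | add z w hz hw => rw [map_add, hz, hw, add_zero]
    | tmul x y =>
      change ∑ p ∈ antidiagonal n, g.π p.1 x ⊗ₜ[R] g'.π p.2 y = 0
      refine sum_eq_zero fun p hp => ?_
      rw [HasAntidiagonal.mem_antidiagonal] at hp
      rcases le_or_gt g.D p.1 with h | h
      · rw [g.π_eq_zero _ h]; simp
      · rw [g'.π_eq_zero p.2 (by omega)]; simp
  sum_π z := by
    change ∑ n ∈ range (g.D + g'.D), tensorAux hg hg' n z = z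
    induction z with
    | zero => simp
    | add z w hz hw => simp only [map_add, sum_add_distrib, hz, hw]
    | tmul x y =>
      change ∑ n ∈ range (g.D + g'.D), ∑ p ∈ antidiagonal n, g.π p.1 x ⊗ₜ[R] g'.π p.2 y = _
      conv_rhs => rw [← g.sum_π x, ← g'.sum_π y, sum_tmul]
      simp only [tmul_sum]
      rw [← sum_product' (f := fun a b => g.π a x ⊗ₜ[R] g'.π b y),
        ← sum_fiberwise_of_maps_to (t := range (g.D + g'.D)) (g := fun p : ℕ × ℕ => p.1 + p.2)]
      · refine sum_congr rfl fun n _ => (sum_subset ?_ ?_).symm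
        · intro p hp
          simpa using (mem_filter.1 hp).2
        · intro p hp hp'
          rw [HasAntidiagonal.mem_antidiagonal] at hp
          simp only [mem_filter, mem_product, mem_range, hp, and_true, not_and, not_lt] at hp'
          rcases le_or_gt g.D p.1 with h | h
          · rw [g.π_eq_zero _ h]; simp
          · rw [g'.π_eq_zero p.2 (hp' h)]; simp
      · intro p hp
        rw [mem_product, mem_range, mem_range] at hp
        rw [mem_range]
        omega
  π_π m n z := by
    change tensorAux hg hg' m (tensorAux hg hg' n z) = if m = n then tensorAux hg hg' n z else 0
    induction z with
    | zero => simp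
    | add z w hz hw =>
      simp only [map_add, hz, hw]
      split_ifs <;> simp
    | tmul x y =>
      change tensorAux hg hg' m (∑ p ∈ antidiagonal n, g.π p.1 x ⊗ₜ[R] g'.π p.2 y) =
        if m = n then (∑ p ∈ antidiagonal n, g.π p.1 x ⊗ₜ[R] g'.π p.2 y) else 0
      rw [map_sum]
      have : ∀ p ∈ antidiagonal n, tensorAux hg hg' m (g.π p.1 x ⊗ₜ[R] g'.π p.2 y) =
          if m = n then g.π p.1 x ⊗ₜ[R] g'.π p.2 y else 0 := by
        intro p hp
        rw [HasAntidiagonal.mem_antidiagonal] at hp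
        change ∑ q ∈ antidiagonal m, g.π q.1 (g.π p.1 x) ⊗ₜ[R] g'.π q.2 (g'.π p.2 y) = _
        simp only [g.π_π, g'.π_π]
        split_ifs with h
        · rw [sum_eq_single p]
          · simp
          · intro q hq hne
            rw [HasAntidiagonal.mem_antidiagonal] at hq
            rw [if_neg, zero_tmul]
            intro h1
            exact hne (Prod.ext h1 (by omega))
          · intro h'
            exact absurd (HasAntidiagonal.mem_antidiagonal.2 (by omega)) h'
        · refine sum_eq_zero fun q hq => ?_
          rw [HasAntidiagonal.mem_antidiagonal] at hq
          by_cases h1 : q.1 = p.1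
          · rw [if_neg (c := q.2 = p.2) (by omega), tmul_zero]
          · rw [if_neg h1, zero_tmul]
      rw [sum_congr rfl this]
      split_ifs <;> simp

lemma tensor_π (hg : Compat gR g) (hg' : Compat gR g') (n : ℕ) (x : X) (y : Y) :
    (tensor hg hg').π n (x ⊗ₜ y) = ∑ p ∈ antidiagonal n, g.π p.1 x ⊗ₜ[R] g'.π p.2 y := rfl

/-! ### Graded kernels, shifts and the swap -/

/-- The grading inherited by the kernel of a graded map. -/
def ker {φ : X →ₗ[R] Y} (hφ : IsGraded g g' (φ.restrictScalars k)) :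
    Gr k (LinearMap.ker φ) where
  π n :=
    { toFun := fun x => ⟨g.π n x, by
        have h := hφ n x
        rw [LinearMap.restrictScalars_apply, LinearMap.restrictScalars_apply,
          LinearMap.mem_ker.1 x.2, map_zero] at h
        exact h⟩
      map_add' := fun x y => by ext; simp
      map_smul' := fun c x => by ext; simp }
  D := g.D
  π_eq_zero n hn := by
    ext x
    simp [g.π_eq_zero n hn]
  sum_π x := Subtype.ext (by simpa using g.sum_π x.1)
  π_π m n x := Subtype.ext (by
    have := g.π_π m n x.1
    split_ifs with h
    · simpa [h] using this
    · simpa [h] using this)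

lemma coe_ker_π {φ : X →ₗ[R] Y} (hφ : IsGraded g g' (φ.restrictScalars k)) (n : ℕ)
    (x : LinearMap.ker φ) : (((ker hφ).π n x : LinearMap.ker φ) : X) = g.π n x := rfl

lemma compat_ker (hg : Compat gR g) {φ : X →ₗ[R] Y} (hφ : IsGraded g g' (φ.restrictScalars k)) :
    Compat gR (ker hφ) := by
  intro n r x
  ext
  rw [coe_ker_π, AddSubmonoidClass.coe_finsetSum]
  exact hg n r x

lemma isGraded_subtype {φ : X →ₗ[R] Y} (hφ : IsGraded g g' (φ.restrictScalars k)) :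
    IsGraded (ker hφ) g ((LinearMap.ker φ).subtype.restrictScalars k) := fun _ _ => rfl

lemma sum_antidiagonal_shift {M : Type*} [AddCommMonoid M] (n d : ℕ) (F : ℕ → ℕ → M) :
    (∑ p ∈ antidiagonal n, if d ≤ p.2 then F p.1 (p.2 - d) else 0) =
      if d ≤ n then ∑ p ∈ antidiagonal (n - d), F p.1 p.2 else 0 := by
  split_ifs with h
  · rw [← sum_filter]
    refine sum_nbij' (fun p => (p.1, p.2 - d)) (fun p => (p.1, p.2 + d)) ?_ ?_ ?_ ?_ ?_
    all_goals rintro ⟨a, b⟩ hp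
    all_goals simp only [mem_filter, HasAntidiagonal.mem_antidiagonal, Prod.mk.injEq, true_and] at hp ⊢
    all_goals omega
  · refine sum_eq_zero fun p hp => ?_
    rw [HasAntidiagonal.mem_antidiagonal] at hp
    rw [if_neg (by omega)]

lemma compat_shift {ι : Type*} [Fintype ι] (hg : Compat gR g) (d : ι → ℕ) :
    Compat gR (g.shift d) := by
  intro n r f
  ext i
  rw [shift_π, Finset.sum_apply]
  simp only [Pi.smul_apply, shift_π, smul_ite, smul_zero]
  rw [sum_antidiagonal_shift n (d i) fun a b => gR.π a r • g.π b (f i), hg]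

lemma isGraded_map {h : Gr k X'} {h' : Gr k Y'} (hg : Compat gR g) (hg' : Compat gR g')
    (hh : Compat gR h) (hh' : Compat gR h') {f : X →ₗ[R] X'} {f' : Y →ₗ[R] Y'}
    (hf : IsGraded g h (f.restrictScalars k)) (hf' : IsGraded g' h' (f'.restrictScalars k)) :
    IsGraded (tensor hg hg') (tensor hh hh') ((TensorProduct.map f f').restrictScalars k) := by
  intro n z
  rw [LinearMap.restrictScalars_apply, LinearMap.restrictScalars_apply]
  induction z with
  | zero => simp
  | add z w hz hw => simp only [map_add, hz, hw]
  | tmul x y =>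
    rw [tensor_π, map_sum, TensorProduct.map_tmul, tensor_π]
    refine sum_congr rfl fun p _ => ?_
    rw [TensorProduct.map_tmul]
    congr 1
    · exact hf _ _
    · exact hf' _ _

lemma isGraded_id (g : Gr k X) : IsGraded g g ((LinearMap.id : X →ₗ[R] X).restrictScalars k) :=
  fun _ _ => rfl

/-- The exchange of factors on `X ⊗[R] X`, as a `k`-linear map. -/
def swap (k : Type*) [Field k] (R : Type*) [CommRing R] [Algebra k R] (X : Type*) [AddCommGroup X]
    [Module R X] [Module k X] [IsScalarTower k R X] : X ⊗[R] X →ₗ[k] X ⊗[R] X :=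
  (TensorProduct.comm R X X).toLinearMap.restrictScalars k

lemma swap_tmul (x y : X) : swap k R X (x ⊗ₜ y) = y ⊗ₜ x := rfl

lemma swap_swap (z : X ⊗[R] X) : swap k R X (swap k R X z) = z :=
  (TensorProduct.comm R X X).symm_apply_apply z

lemma isGraded_swap (hg : Compat gR g) :
    IsGraded (tensor hg hg) (tensor hg hg) (swap k R X) := by
  intro n z
  induction z with
  | zero => simp
  | add z w hz hw => simp only [map_add, hz, hw]
  | tmul x y =>
    rw [tensor_π, map_sum, swap_tmul, tensor_π, ← Nat.sum_antidiagonal_swap]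
    rfl

lemma swap_map (f : X →ₗ[R] Y) (z : X ⊗[R] X) :
    TensorProduct.map f f (swap k R X z) = swap k R Y (TensorProduct.map f f z) := by
  induction z with
  | zero => simp
  | add z w hz hw => simp only [map_add, hz, hw]
  | tmul x y => rfl

lemma isGraded_piScalarRight {ι : Type*} [Fintype ι] [DecidableEq ι] (hR : Compat gR gR)
    (hg : Compat gR g) (d : ι → ℕ) :
    IsGraded (tensor hg (compat_shift hR d)) (g.shift d)
      ((TensorProduct.piScalarRight R R X ι).toLinearMap.restrictScalars k) := by
  intro n z
  rw [LinearMap.restrictScalars_apply, LinearMap.restrictScalars_apply]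
  induction z with
  | zero => simp
  | add z w hz hw => simp only [map_add, hz, hw]
  | tmul x f =>
    rw [tensor_π, map_sum]
    ext i
    rw [Finset.sum_apply, shift_π]
    simp only [LinearEquiv.coe_coe, TensorProduct.piScalarRight_apply,
      TensorProduct.piScalarRightHom_tmul, shift_π]
    simp only [ite_smul, zero_smul]
    rw [sum_antidiagonal_shift n (d i) fun a b => gR.π b (f i) • g.π a x, hg,
      ← Nat.sum_antidiagonal_swap]
    rfl

lemma H_shift [FiniteDimensional k X] {ι : Type*} [Fintype ι] (g : Gr k X) (d : ι → ℕ) :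
    (g.shift d).H = (∑ i, Polynomial.X ^ d i) * g.H := by
  ext n
  rw [coeff_H, sum_mul, Polynomial.finsetSum_coeff]
  simp only [Polynomial.coeff_X_pow_mul', coeff_H]
  let T : ι → Submodule k X := fun i => if d i ≤ n then g.comp (n - d i) else ⊥
  have hT : (g.shift d).comp n = Submodule.pi Set.univ T := by
    ext f
    rw [mem_comp, Submodule.mem_pi, funext_iff]
    refine ⟨fun h i _ => ?_, fun h i => ?_⟩
    · have := h i
      rw [shift_π] at this
      simp only [T]
      split_ifs at this ⊢
      · exact mem_comp.2 this
      · exact this.symm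
    · have := h i (Set.mem_univ i)
      simp only [T] at this
      rw [shift_π]
      split_ifs at this ⊢
      · exact mem_comp.1 this
      · exact this.symm
  have e : Submodule.pi Set.univ T ≃ₗ[k] (∀ i, T i) :=
    { toFun := fun f i => ⟨f.1 i, f.2 i (Set.mem_univ i)⟩
      invFun := fun f => ⟨fun i => f i, fun i _ => (f i).2⟩
      map_add' := fun _ _ => rfl
      map_smul' := fun _ _ => rfl
      left_inv := fun _ => rfl
      right_inv := fun _ => rfl }
  rw [hT, e.finrank_eq, Module.finrank_pi_fintype, Nat.cast_sum]
  refine sum_congr rfl fun i _ => ?_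
  by_cases h : d i ≤ n
  · rw [show T i = g.comp (n - d i) from if_pos h, if_pos h]
  · rw [show T i = ⊥ from if_neg h, if_neg h, finrank_bot, Nat.cast_zero]

/-! ### Antisymmetric tensors and their Hilbert polynomial -/

/-- The Hilbert polynomial of the antisymmetric tensors in `X ⊗[R] X`. -/
noncomputable def Ha (hg : Compat gR g) : Polynomial ℤ :=
  ∑ n ∈ range (tensor hg hg).D,
    Polynomial.monomial n (antiDim ((isGraded_swap hg).res n) : ℤ)

lemma coeff_Ha (hg : Compat gR g) (n : ℕ) :
    (Ha hg).coeff n = antiDim ((isGraded_swap hg).res n) := by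
  simp only [Ha, Polynomial.finsetSum_coeff, Polynomial.coeff_monomial, sum_ite_eq', mem_range]
  split_ifs with h
  · rfl
  · rw [antiDim, eq_comm, Nat.cast_eq_zero]
    have : Subsingleton ((tensor hg hg).comp n) := by
      rw [(tensor hg hg).comp_eq_bot (not_lt.1 h)]; infer_instance
    exact Module.finrank_zero_of_subsingleton

/-- The Hilbert polynomial of the symmetric tensors minus that of the antisymmetric ones, that is, the
graded trace of the swap on `X ⊗[R] X` (in characteristic not `2`). -/
noncomputable def Hd (hg : Compat gR g) : Polynomial ℤ := (tensor hg hg).H - 2 * Ha hg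

/-- If a graded injection `s` identifies `X` with the `(-1)`-eigenspace of `τ`, then the antisymmetric
dimensions are the dimensions of the components of `X`. -/
lemma antiDim_res {V : Type*} [AddCommGroup V] [Module k V] {gV : Gr k V} {τ : V →ₗ[k] V}
    (hτ : IsGraded gV gV τ) {g : Gr k X} {s : X →ₗ[k] V} (hs : IsGraded g gV s)
    (hsi : Function.Injective s) (hsr : ∀ v, τ v + v = 0 ↔ ∃ x, s x = v) (n : ℕ) :
    antiDim (hτ.res n) = Module.finrank k (g.comp n) := by
  have : LinearMap.ker (hτ.res n + LinearMap.id) = LinearMap.range (hs.res n) := by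
    ext ⟨v, hv⟩
    simp only [LinearMap.mem_ker, LinearMap.mem_range, Subtype.ext_iff, IsGraded.coe_res,
      LinearMap.add_apply, LinearMap.id_apply, Submodule.coe_add, ZeroMemClass.coe_zero]
    rw [hsr]
    constructor
    · rintro ⟨x, rfl⟩
      exact ⟨⟨_, g.π_mem n x⟩, by rw [hs, mem_comp.1 hv]⟩
    · rintro ⟨x, hx⟩
      exact ⟨x, hx⟩
  rw [antiDim, this, LinearMap.finrank_range_of_inj (hs.res_injective hsi n)]

/-- `R^ι ⊗ R^ι` as the space of square matrices. -/
noncomputable def matEquiv (R : Type*) [CommRing R] (m : ℕ) :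
    (Fin m → R) ⊗[R] (Fin m → R) ≃ₗ[R] (Fin m → Fin m → R) :=
  TensorProduct.piScalarRight R R (Fin m → R) (Fin m)

lemma matEquiv_tmul {m : ℕ} (x f : Fin m → R) (i j : Fin m) :
    matEquiv R m (x ⊗ₜ f) i j = f i * x j := by
  simp [matEquiv]

lemma matEquiv_swap {m : ℕ} (z : (Fin m → R) ⊗[R] (Fin m → R)) (i j : Fin m) :
    matEquiv R m (swap k R _ z) i j = matEquiv R m z j i := by
  induction z with
  | zero => simp
  | add z w hz hw => simp only [map_add, Pi.add_apply, hz, hw]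
  | tmul x f => rw [swap_tmul, matEquiv_tmul, matEquiv_tmul, mul_comm]

lemma isGraded_matEquiv {m : ℕ} (hR : Compat gR gR) (d : Fin m → ℕ) :
    IsGraded (tensor (compat_shift hR d) (compat_shift hR d)) ((gR.shift d).shift d)
      ((matEquiv R m).toLinearMap.restrictScalars k) :=
  isGraded_piScalarRight hR _ d

/-- The antisymmetric matrix with given entries above the diagonal. -/
def antiMat (k R : Type*) [Field k] [CommRing R] [Algebra k R] (m : ℕ) :
    ({p : Fin m × Fin m // p.1 < p.2} → R) →ₗ[k] (Fin m → Fin m → R) where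
  toFun a i j := if h : i < j then a ⟨(i, j), h⟩ else if h : j < i then - a ⟨(j, i), h⟩ else 0
  map_add' a b := by
    ext i j
    simp only [Pi.add_apply]
    split_ifs <;> simp [add_comm]
  map_smul' c a := by
    ext i j
    simp only [Pi.smul_apply]
    split_ifs <;> simp

lemma antiMat_injective (m : ℕ) : Function.Injective (antiMat k R m) := by
  intro a b h
  ext ⟨⟨i, j⟩, hij⟩
  have := congrFun (congrFun h i) j
  simpa [antiMat, hij] using this

lemma mem_range_antiMat (h2 : (2 : k) ≠ 0) (m : ℕ) (A : Fin m → Fin m → R) :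
    (∀ i j, A j i + A i j = 0) ↔ ∃ a, antiMat k R m a = A := by
  constructor
  · intro h
    refine ⟨fun p => A p.1.1 p.1.2, ?_⟩
    ext i j
    rcases lt_trichotomy i j with hij | rfl | hij
    · simp [antiMat, hij]
    · have h' : (2 : k) • A i i = 0 := by rw [two_smul]; exact h i i
      simp only [antiMat, LinearMap.coe_mk, AddHom.coe_mk, lt_irrefl, dite_false]
      exact ((smul_eq_zero_iff_right h2).1 h').symm
    · simp only [antiMat, LinearMap.coe_mk, AddHom.coe_mk, hij, dite_true, not_lt_of_gt hij,
        dite_false]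
      exact (eq_neg_of_add_eq_zero_left (h j i)).symm
  · rintro ⟨a, rfl⟩ i j
    rcases lt_trichotomy i j with hij | rfl | hij
    · simp [antiMat, hij, not_lt_of_gt hij]
    · simp [antiMat]
    · simp [antiMat, hij, not_lt_of_gt hij]

lemma isGraded_antiMat (m : ℕ) (d : Fin m → ℕ) :
    IsGraded (gR.shift fun p : {p : Fin m × Fin m // p.1 < p.2} => d p.1.1 + d p.1.2)
      ((gR.shift d).shift d) (antiMat k R m) := by
  have key : ∀ n a b r, (if a + b ≤ n then gR.π (n - (a + b)) r else 0) =
      if a ≤ n then if b ≤ n - a then gR.π (n - a - b) r else 0 else 0 := by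
    intro n a b r
    by_cases h1 : a ≤ n
    · by_cases h2 : b ≤ n - a
      · rw [if_pos h1, if_pos h2, if_pos (by omega), Nat.sub_sub]
      · rw [if_pos h1, if_neg h2, if_neg (by omega)]
    · rw [if_neg h1, if_neg (by omega)]
  intro n a
  ext i j
  have hr : ((gR.shift d).shift d).π n (antiMat k R m a) i j =
      if d i + d j ≤ n then gR.π (n - (d i + d j)) (antiMat k R m a i j) else 0 := by
    rw [shift_π, key]
    split_ifs with h
    · rw [shift_π]; simp [*]
    · rw [shift_π]; simp [*]
    · rfl
  rw [hr]
  simp only [antiMat, LinearMap.coe_mk, AddHom.coe_mk, shift_π]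
  rcases lt_trichotomy i j with hij | rfl | hij
  · simp [hij]
  · simp
  · simp only [hij, not_lt_of_gt hij, dite_true, dite_false, add_comm (d j), map_neg]
    split_ifs <;> simp

/-- Antisymmetric tensors in `F ⊗ F`, for `F` graded free on generators of degrees `d i`, are the
antisymmetric matrices; they are free on the pairs `i < j`, in degrees `d i + d j`. -/
lemma Ha_shift [FiniteDimensional k R] (h2 : (2 : k) ≠ 0) {m : ℕ} (hR : Compat gR gR)
    (d : Fin m → ℕ) :
    Ha (compat_shift hR d) =
      (∑ p : {p : Fin m × Fin m // p.1 < p.2}, Polynomial.X ^ (d p.1.1 + d p.1.2)) * gR.H := by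
  rw [← H_shift]
  ext n
  rw [coeff_Ha, coeff_H]
  congr 1
  let e : (Fin m → R) ⊗[R] (Fin m → R) ≃ₗ[k] (Fin m → Fin m → R) :=
    (matEquiv R m).restrictScalars k
  refine antiDim_res (isGraded_swap (compat_shift hR d)) (s := e.symm.toLinearMap ∘ₗ antiMat k R m)
    ?_ ?_ ?_ n
  · intro n a
    apply e.injective
    have := isGraded_matEquiv hR d n (e.symm (antiMat k R m a))
    change e _ = ((gR.shift d).shift d).π n (e _) at this
    rw [e.apply_symm_apply] at this
    simp only [LinearMap.comp_apply, LinearEquiv.coe_coe]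
    rw [e.apply_symm_apply, this, isGraded_antiMat m d]
  · rw [LinearMap.coe_comp]
    exact e.symm.injective.comp (antiMat_injective m)
  · intro v
    rw [← e.map_eq_zero_iff, map_add]
    have h3 := mem_range_antiMat h2 m (e v)
    have h4 : e (swap k R (Fin m → R) v) + e v = 0 ↔ ∀ i j, e v j i + e v i j = 0 := by
      rw [funext_iff]
      refine forall_congr' fun i => ?_
      rw [funext_iff]
      refine forall_congr' fun j => ?_
      have := matEquiv_swap (k := k) v i j
      change e _ i j = e _ j i at this
      rw [← this]; rfl
    rw [h4, h3]
    refine exists_congr fun a => ?_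
    simp only [LinearMap.comp_apply, LinearEquiv.coe_coe]
    rw [e.symm_apply_eq]

lemma sum_pairs (m : ℕ) (F : Fin m → Fin m → Polynomial ℤ) (hF : ∀ i j, F i j = F j i) :
    ∑ i, ∑ j, F i j =
      ∑ i, F i i + 2 * ∑ p : {p : Fin m × Fin m // p.1 < p.2}, F p.1.1 p.1.2 := by
  have h1 : ∑ p : {p : Fin m × Fin m // p.1 < p.2}, F p.1.1 p.1.2 =
      ∑ i, ∑ j, if i < j then F i j else 0 := by
    rw [← sum_subtype (univ.filter fun p : Fin m × Fin m => p.1 < p.2) (by simp)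
      fun p => F p.1 p.2, sum_filter, ← univ_product_univ, sum_product]
  have h2 : ∑ i, ∑ j, (if i < j then F i j else 0) = ∑ i, ∑ j, if j < i then F i j else 0 := by
    rw [sum_comm]
    simp only [hF]
  have h3 : ∑ i, F i i = ∑ i, ∑ j, if i = j then F i j else 0 := by simp
  rw [h1, two_mul]
  nth_rewrite 2 [h2]
  rw [h3, ← sum_add_distrib, ← sum_add_distrib]
  refine sum_congr rfl fun i _ => ?_
  rw [← sum_add_distrib, ← sum_add_distrib]
  refine sum_congr rfl fun j _ => ?_
  rcases lt_trichotomy i j with h | rfl | h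
  · simp [h, h.ne, not_lt_of_gt h]
  · simp
  · simp [h, h.ne', not_lt_of_gt h]

/-- With `P = ∑ T^{d i}`, the graded trace of the swap on `F ⊗ F` is `P(T²) H_R(T)`: only the diagonal
matrix entries contribute. -/
lemma Hd_shift [FiniteDimensional k R] (h2 : (2 : k) ≠ 0) {m : ℕ} (hR : Compat gR gR)
    (d : Fin m → ℕ) :
    Hd (compat_shift hR d) =
      Polynomial.expand ℤ 2 (∑ i, Polynomial.X ^ d i) * gR.H := by
  have hT : (tensor (compat_shift hR d) (compat_shift hR d)).H =
      (∑ i, Polynomial.X ^ d i) * ((∑ i, Polynomial.X ^ d i) * gR.H) := by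
    rw [← H_shift, ← H_shift]
    ext n
    rw [coeff_H, coeff_H, (isGraded_matEquiv hR d).finrank_eq (matEquiv R m).bijective]
  rw [Hd, hT, Ha_shift h2 hR d, ← mul_assoc, ← mul_assoc, ← sub_mul]
  congr 1
  rw [map_sum, sum_mul_sum, sub_eq_iff_eq_add]
  simp only [← pow_add]
  rw [sum_pairs m (fun i j => (Polynomial.X : Polynomial ℤ) ^ (d i + d j))
    fun i j => by rw [add_comm]]
  congr 1
  refine sum_congr rfl fun i _ => ?_
  rw [map_pow, Polynomial.expand_X, ← pow_mul, two_mul]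

/-! ### The recursion along a presentation -/

section presentation

variable {S A B : Type*} [CommRing S] [AddCommGroup A] [Module S A] [AddCommGroup B] [Module S B]
  {φ : A →ₗ[S] B}

/-- The kernel of `A ⊗ A → B ⊗ B` is the sum of the images of `N ⊗ A` and `A ⊗ N`, where `N = ker φ`;
the second is written as the swap of the first. -/
lemma map_eq_zero_iff_kernel (hφ : Function.Surjective φ) (x : A ⊗[S] A) :
    TensorProduct.map φ φ x = 0 ↔ ∃ a b : LinearMap.ker φ ⊗[S] A,
      (LinearMap.ker φ).subtype.rTensor A a +
        TensorProduct.comm S A A ((LinearMap.ker φ).subtype.rTensor A b) = x := by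
  have hex : Function.Exact (LinearMap.ker φ).subtype φ := LinearMap.exact_subtype_ker_map φ
  rw [← LinearMap.mem_ker, TensorProduct.map_ker hex hφ hex hφ, sup_comm, Submodule.mem_sup]
  simp only [LinearMap.mem_range, exists_exists_eq_and]
  refine exists_congr fun a => ?_
  constructor
  · rintro ⟨b, rfl⟩
    refine ⟨TensorProduct.comm S _ _ b, ?_⟩
    rw [← LinearMap.comm_comp_rTensor_comp_comm_eq]
    simp
  · rintro ⟨b, rfl⟩
    refine ⟨TensorProduct.comm S _ _ b, ?_⟩
    rw [← LinearMap.comm_comp_rTensor_comp_comm_eq]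
    simp

/-- Inside `A ⊗ A`, the image of `N ⊗ N` is the intersection of the images of `N ⊗ A` and `A ⊗ N`,
provided that `N ⊗ B → A ⊗ B` is injective, i.e. `Tor_1(B, B) = 0`. -/
lemma mem_range_map_iff [Module.Flat S A] (hφ : Function.Surjective φ)
    (h : Function.Injective ((LinearMap.ker φ).subtype.rTensor B)) (x : A ⊗[S] A) :
    (∃ w, TensorProduct.map (LinearMap.ker φ).subtype (LinearMap.ker φ).subtype w = x) ↔
      (∃ a, (LinearMap.ker φ).subtype.rTensor A a = x) ∧
      ∃ b, TensorProduct.comm S A A ((LinearMap.ker φ).subtype.rTensor A b) = x := by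
  have hex : Function.Exact (LinearMap.ker φ).subtype φ := LinearMap.exact_subtype_ker_map φ
  constructor
  · rintro ⟨w, rfl⟩
    refine ⟨⟨(LinearMap.ker φ).subtype.lTensor _ w, ?_⟩,
      ⟨TensorProduct.comm S _ _ ((LinearMap.ker φ).subtype.rTensor _ w), ?_⟩⟩
    · rw [← LinearMap.comp_apply, LinearMap.rTensor_comp_lTensor]
    · induction w with
      | zero => simp
      | add z w hz hw => simp only [map_add, hz, hw]
      | tmul x y => simp
  · rintro ⟨⟨a, rfl⟩, ⟨b, hb⟩⟩
    have h1 : φ.lTensor A ((LinearMap.ker φ).subtype.rTensor A a) = 0 := by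
      rw [← hb]
      clear hb
      induction b with
      | zero => simp
      | add z w hz hw => simp only [map_add, hz, hw, add_zero]
      | tmul x y => simp
    have h2 : (LinearMap.ker φ).subtype.rTensor B (φ.lTensor _ a) = 0 := by
      rw [← h1, ← LinearMap.comp_apply, ← LinearMap.comp_apply, LinearMap.rTensor_comp_lTensor,
        LinearMap.lTensor_comp_rTensor]
    have h3 : φ.lTensor (LinearMap.ker φ) a = 0 := h (by rw [h2, map_zero])
    obtain ⟨w, rfl⟩ := (lTensor_exact _ hex hφ a).1 h3
    exact ⟨w, by rw [← LinearMap.comp_apply, LinearMap.rTensor_comp_lTensor]⟩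

lemma map_subtype_injective [Module.Flat S A]
    (h : Function.Injective ((LinearMap.ker φ).subtype.rTensor (LinearMap.ker φ))) :
    Function.Injective
      (TensorProduct.map (LinearMap.ker φ).subtype (LinearMap.ker φ).subtype) := by
  rw [← LinearMap.lTensor_comp_rTensor, LinearMap.coe_comp]
  exact (Module.Flat.lTensor_preserves_injective_linearMap _
    (LinearMap.ker φ).injective_subtype).comp h

end presentation

section graded_quotient

variable {V W Q A : Type*} [AddCommGroup V] [Module k V] [AddCommGroup W] [Module k W]
  [AddCommGroup Q] [Module k Q] [AddCommGroup A] [Module k A] [FiniteDimensional k V]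
  {gV : Gr k V} {gW : Gr k W} {gQ : Gr k Q} {gA : Gr k A}
  {τ : V →ₗ[k] V} {τW : W →ₗ[k] W} {τQ : Q →ₗ[k] Q}
  {j : A →ₗ[k] V} {f : W →ₗ[k] V} {q : V →ₗ[k] Q}

/-- Both dimension counts in each degree of a graded space `V` with a graded involution `τ`. -/
lemma graded_quotient (h2 : (2 : k) ≠ 0)
    (gτ : IsGraded gV gV τ) (gτW : IsGraded gW gW τW) (gτQ : IsGraded gQ gQ τQ)
    (gj : IsGraded gA gV j) (gf : IsGraded gW gV f) (gq : IsGraded gV gQ q)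
    (hτ : ∀ x, τ (τ x) = x) (hτW : ∀ x, τW (τW x) = x)
    (hj : Function.Injective j) (hf : Function.Injective f) (hq : Function.Surjective q)
    (hfτ : ∀ w, f (τW w) = τ (f w)) (hqτ : ∀ v, q (τ v) = τQ (q v))
    (hfr : ∀ x, (∃ w, f w = x) ↔ (∃ a, j a = x) ∧ ∃ b, τ (j b) = x)
    (hqk : ∀ x, q x = 0 ↔ ∃ a b, j a + τ (j b) = x) (n : ℕ) :
    Module.finrank k (gQ.comp n) + 2 * Module.finrank k (gA.comp n) =
        Module.finrank k (gV.comp n) + Module.finrank k (gW.comp n) ∧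
      antiDim (gτQ.res n) + Module.finrank k (gA.comp n) + antiDim (gτW.res n) =
        antiDim (gτ.res n) + Module.finrank k (gW.comp n) := by
  have fr : ∀ x : gV.comp n, (∃ w, gf.res n w = x) ↔
      (∃ a, gj.res n a = x) ∧ ∃ b, gτ.res n (gj.res n b) = x := by
    intro x
    constructor
    · rintro ⟨w, hw⟩
      obtain ⟨⟨a, ha⟩, ⟨b, hb⟩⟩ := (hfr x.1).1 ⟨w, congrArg Subtype.val hw⟩
      refine ⟨⟨⟨_, gA.π_mem n a⟩, Subtype.ext ?_⟩, ⟨⟨_, gA.π_mem n b⟩, Subtype.ext ?_⟩⟩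
      · rw [IsGraded.coe_res, gj, ha, mem_comp.1 x.2]
      · rw [IsGraded.coe_res, IsGraded.coe_res, gj, gτ, hb, mem_comp.1 x.2]
    · rintro ⟨⟨a, ha⟩, ⟨b, hb⟩⟩
      obtain ⟨w, hw⟩ :=
        (hfr x.1).2 ⟨⟨a, congrArg Subtype.val ha⟩, ⟨b, congrArg Subtype.val hb⟩⟩
      refine ⟨⟨_, gW.π_mem n w⟩, Subtype.ext ?_⟩
      rw [IsGraded.coe_res, gf, hw, mem_comp.1 x.2]
  have qk : ∀ x : gV.comp n, gq.res n x = 0 ↔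
      ∃ a b, gj.res n a + gτ.res n (gj.res n b) = x := by
    intro x
    constructor
    · intro hx
      obtain ⟨a, b, hab⟩ := (hqk x.1).1 (congrArg Subtype.val hx)
      refine ⟨⟨_, gA.π_mem n a⟩, ⟨_, gA.π_mem n b⟩, Subtype.ext ?_⟩
      rw [Submodule.coe_add, IsGraded.coe_res, IsGraded.coe_res, IsGraded.coe_res, gj, gj, gτ,
        ← map_add, hab, mem_comp.1 x.2]
    · rintro ⟨a, b, hab⟩
      exact Subtype.ext ((hqk x.1).2 ⟨a, b, congrArg Subtype.val hab⟩)
  exact ⟨dim_quotient_sup (gτ.res n) (fun x => Subtype.ext (hτ x.1)) (gj.res n)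
      (gj.res_injective hj n) (gf.res n) (gf.res_injective hf n) (gq.res n)
      (gq.res_surjective hq n) fr qk,
    antiDim_quotient_sup h2 (gτ.res n) (fun x => Subtype.ext (hτ x.1)) (gτW.res n)
      (fun x => Subtype.ext (hτW x.1)) (gτQ.res n) (gj.res n)
      (gj.res_injective hj n) (gf.res n) (gf.res_injective hf n) (gq.res n)
      (gq.res_surjective hq n) (fun x => Subtype.ext (hfτ x.1)) (fun x => Subtype.ext (hqτ x.1))
      fr qk⟩

end graded_quotient

section recursion

variable {F : Type*} [AddCommGroup F] [Module R F] [Module k F] [IsScalarTower k R F]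
  {gF : Gr k F} [Module.Flat R F] [FiniteDimensional k (F ⊗[R] F)]
  {φ : F →ₗ[R] X}

/-- The two relations between Hilbert polynomials of the tensor squares of `X` and of its syzygy
`N = ker φ`. -/
lemma tensor_recursion (h2 : (2 : k) ≠ 0) (hF : Compat gR gF) (hg : Compat gR g)
    (hφ : IsGraded gF g (φ.restrictScalars k)) (hs : Function.Surjective φ)
    (h : Function.Injective ((LinearMap.ker φ).subtype.rTensor X))
    (h' : Function.Injective ((LinearMap.ker φ).subtype.rTensor (LinearMap.ker φ))) :
    (tensor hg hg).H + 2 * (tensor (compat_ker hF hφ) hF).H =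
        (tensor hF hF).H + (tensor (compat_ker hF hφ) (compat_ker hF hφ)).H ∧
      Ha hg + (tensor (compat_ker hF hφ) hF).H + Ha (compat_ker hF hφ) =
        Ha hF + (tensor (compat_ker hF hφ) (compat_ker hF hφ)).H := by
  set hN := compat_ker hF hφ
  have gj : IsGraded (tensor hN hF) (tensor hF hF)
      (((LinearMap.ker φ).subtype.rTensor F).restrictScalars k) :=
    isGraded_map hN hF hF hF (isGraded_subtype hφ) (isGraded_id gF)
  have gf : IsGraded (tensor hN hN) (tensor hF hF)
      ((TensorProduct.map (LinearMap.ker φ).subtype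
        (LinearMap.ker φ).subtype).restrictScalars k) :=
    isGraded_map hN hN hF hF (isGraded_subtype hφ) (isGraded_subtype hφ)
  have gq : IsGraded (tensor hF hF) (tensor hg hg)
      ((TensorProduct.map φ φ).restrictScalars k) := isGraded_map hF hF hg hg hφ hφ
  have ij : Function.Injective ((LinearMap.ker φ).subtype.rTensor F) :=
    Module.Flat.rTensor_preserves_injective_linearMap _ (LinearMap.ker φ).injective_subtype
  have key := graded_quotient h2 (isGraded_swap hF) (isGraded_swap hN) (isGraded_swap hg) gj gf gq
    swap_swap swap_swap ij (map_subtype_injective h') (TensorProduct.map_surjective hs hs)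
    (swap_map _) (swap_map _) (mem_range_map_iff hs h) (map_eq_zero_iff_kernel hs)
  constructor
  · ext n
    rw [Polynomial.coeff_add, two_mul, Polynomial.coeff_add, Polynomial.coeff_add]
    simp only [coeff_H]
    have := (key n).1
    omega
  · ext n
    simp only [Polynomial.coeff_add, coeff_H, coeff_Ha]
    have := (key n).2
    omega

end recursion

/-! ### Vanishing of the defects -/

section low

variable {s : ℕ}

lemma X_pow_dvd_H (hs : ∀ n < s, g.comp n = ⊥) : Polynomial.X ^ s ∣ g.H := by
  rw [Polynomial.X_pow_dvd_iff]
  intro n hn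
  rw [coeff_H, hs n hn, finrank_bot, Nat.cast_zero]

lemma tensor_comp_eq_bot (hg : Compat gR g) (hs : ∀ n < s, g.comp n = ⊥) {n : ℕ} (hn : n < s) :
    (tensor hg hg).comp n = ⊥ := by
  rw [comp, LinearMap.range_eq_bot]
  ext z
  rw [LinearMap.zero_apply]
  induction z with
  | zero => simp
  | add z w hz hw => rw [map_add, hz, hw, add_zero]
  | tmul x y =>
    rw [tensor_π]
    refine sum_eq_zero fun p hp => ?_
    rw [HasAntidiagonal.mem_antidiagonal] at hp
    have h := g.π_mem p.1 x
    rw [hs p.1 (by omega), Submodule.mem_bot] at h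
    rw [h, zero_tmul]

lemma X_pow_dvd_Ha (hg : Compat gR g) (hs : ∀ n < s, g.comp n = ⊥) :
    Polynomial.X ^ s ∣ Ha hg := by
  rw [Polynomial.X_pow_dvd_iff]
  intro n hn
  have : Subsingleton ((tensor hg hg).comp n) := by
    rw [tensor_comp_eq_bot hg hs hn]; infer_instance
  rw [coeff_Ha, antiDim, Module.finrank_zero_of_subsingleton, Nat.cast_zero]

/-- A graded presentation `F → X` on a homogeneous `k`-basis of `X`. Since the degree `0` part of `R` is
`k` and the generators are linearly independent over `k`, the kernel starts at least one degree
higher than `X`. The presentation is far from minimal, but this increase of degree is all that is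
needed. -/
lemma exists_presentation (hg : Compat gR g)
    (h0 : ∀ r ∈ gR.comp 0, ∃ c, algebraMap k R c = r) [FiniteDimensional k X]
    (hs : ∀ n < s, g.comp n = ⊥) :
    ∃ (m : ℕ) (d : Fin m → ℕ) (φ : (Fin m → R) →ₗ[R] X), Function.Surjective φ ∧
      ∃ hφ : IsGraded (gR.shift d) g (φ.restrictScalars k), ∀ n < s + 1, (ker hφ).comp n = ⊥ := by
  obtain ⟨m, b, d, hb⟩ := g.exists_homogeneous_basis
  have hd : ∀ i, s ≤ d i := by
    intro i
    by_contra hlt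
    have := hb i
    rw [hs _ (not_le.1 hlt), Submodule.mem_bot] at this
    exact b.ne_zero i this
  let φ : (Fin m → R) →ₗ[R] X := Fintype.linearCombination R b
  have φ_apply : ∀ f, φ f = ∑ i, f i • b i := fun f => Fintype.linearCombination_apply R b f
  have hφ : IsGraded (gR.shift d) g (φ.restrictScalars k) := by
    intro n f
    rw [LinearMap.restrictScalars_apply, LinearMap.restrictScalars_apply, φ_apply, φ_apply, map_sum]
    refine sum_congr rfl fun i _ => ?_
    rw [hg, shift_π]
    have : ∀ p ∈ antidiagonal n, gR.π p.1 (f i) • g.π p.2 (b i) =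
        if p = (n - d i, d i) then (if d i ≤ n then gR.π (n - d i) (f i) else 0) • b i else 0 := by
      rintro ⟨p, q⟩ hp
      rw [HasAntidiagonal.mem_antidiagonal] at hp
      simp only at hp
      by_cases hq : q = d i
      · subst hq
        have hp' : p = n - d i := by omega
        rw [if_pos (by rw [hp']), if_pos (by omega), mem_comp.1 (hb i), hp']
      · rw [if_neg (fun h => hq (congrArg Prod.snd h)), π_of_mem_ne (hb i) hq, smul_zero]
    rw [sum_congr rfl this, sum_ite_eq']
    by_cases h : d i ≤ n
    · rw [if_pos (HasAntidiagonal.mem_antidiagonal.2 (by simp [h]))]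
    · rw [if_neg h, zero_smul, ite_self]
  refine ⟨m, d, φ, ?_, hφ, ?_⟩
  · intro x
    refine ⟨fun i => algebraMap k R (b.repr x i), ?_⟩
    rw [φ_apply]
    simp only [algebraMap_smul]
    exact b.sum_repr x
  · intro n hn
    rw [eq_bot_iff]
    rintro ⟨f, hf⟩ hfn
    rw [mem_comp] at hfn
    have hfn' : (gR.shift d).π n f = f := congrArg Subtype.val hfn
    have hc : ∀ i, ∃ c, algebraMap k R c = f i := by
      intro i
      rw [← hfn', shift_π]
      split_ifs with h
      · have := hd i
        rw [show n - d i = 0 by omega]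
        exact h0 _ (gR.π_mem 0 _)
      · exact ⟨0, map_zero _⟩
    choose c hc using hc
    rw [LinearMap.mem_ker, φ_apply] at hf
    simp only [← hc, algebraMap_smul] at hf
    have hc0 := Fintype.linearIndependent_iff.1 b.linearIndependent c hf
    rw [Submodule.mem_bot]
    ext i
    change f i = 0
    rw [← hc, hc0, map_zero]

end low

section induction

/-- The deviation from `H_R · H_{X ⊗ X} = H_X²`, the relation forced by Tor-independence. -/
noncomputable def defectC (hg : Compat gR g) : Polynomial ℤ :=
  gR.H * (tensor hg hg).H - g.H ^ 2

/-- The deviation from `H_R(T²) · tr(swap | X ⊗ X) = H_R(T) · H_X(T²)`, the analogue of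
`H_R · H_{X ⊗ X} = H_X²` for the graded trace of the swap. -/
noncomputable def defectE (hg : Compat gR g) : Polynomial ℤ :=
  Polynomial.expand ℤ 2 gR.H * Hd hg - gR.H * Polynomial.expand ℤ 2 g.H

/-- The defects of a module living in degrees at least `s` have order at least `s`. -/
lemma X_pow_dvd_defect {s : ℕ} (hg : Compat gR g) (hs : ∀ n < s, g.comp n = ⊥) :
    Polynomial.X ^ s ∣ defectC hg ∧ Polynomial.X ^ s ∣ defectE hg := by
  have hH := X_pow_dvd_H hs
  have hT : Polynomial.X ^ s ∣ (tensor hg hg).H :=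
    X_pow_dvd_H fun n hn => tensor_comp_eq_bot hg hs hn
  refine ⟨dvd_sub (hT.mul_left _) (hH.trans (dvd_pow_self _ two_ne_zero)),
    dvd_sub ((dvd_sub hT ((X_pow_dvd_Ha hg hs).mul_left _)).mul_left _) (Dvd.dvd.mul_left ?_ _)⟩
  obtain ⟨q, hq⟩ := hH
  rw [hq, map_mul, map_pow, Polynomial.expand_X, ← pow_mul, two_mul, pow_add, mul_assoc]
  exact dvd_mul_right _ _

variable [FiniteDimensional k R] [FiniteDimensional k X] {m : ℕ} {d : Fin m → ℕ}
  {φ : (Fin m → R) →ₗ[R] X}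

/-- Passing to the syzygy preserves the first defect and negates the second one. -/
lemma defect_recursion (h2 : (2 : k) ≠ 0) (hR : Compat gR gR) (hg : Compat gR g)
    (hφ : IsGraded (gR.shift d) g (φ.restrictScalars k)) (hs : Function.Surjective φ)
    (h : Function.Injective ((LinearMap.ker φ).subtype.rTensor X))
    (h' : Function.Injective ((LinearMap.ker φ).subtype.rTensor (LinearMap.ker φ))) :
    defectC hg = defectC (compat_ker (compat_shift hR d) hφ) ∧
      defectE hg = - defectE (compat_ker (compat_shift hR d) hφ) := by
  have : FiniteDimensional k ((Fin m → R) ⊗[R] (Fin m → R)) :=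
    Module.Finite.of_injective ((matEquiv R m).toLinearMap.restrictScalars k)
      (matEquiv R m).injective
  have : FiniteDimensional k (LinearMap.ker φ) :=
    Module.Finite.of_injective ((LinearMap.ker φ).subtype.restrictScalars k)
      (LinearMap.ker φ).injective_subtype
  obtain ⟨h3, h4⟩ := tensor_recursion h2 (compat_shift hR d) hg hφ hs h h'
  set hN := compat_ker (compat_shift hR d) hφ
  have h5 := Hd_shift h2 hR d
  have h6 : (tensor hN (compat_shift hR d)).H = (∑ i, Polynomial.X ^ d i) * (ker hφ).H := by
    rw [← H_shift]
    ext n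
    rw [coeff_H, coeff_H, (isGraded_piScalarRight hR hN d).finrank_eq
      (TensorProduct.piScalarRight R R _ (Fin m)).bijective]
  have h7 : (tensor (compat_shift hR d) (compat_shift hR d)).H =
      (∑ i, Polynomial.X ^ d i) * ((∑ i, Polynomial.X ^ d i) * gR.H) := by
    rw [← H_shift, ← H_shift]
    ext n
    rw [coeff_H, coeff_H, (isGraded_matEquiv hR d).finrank_eq (matEquiv R m).bijective]
  have h8 : (∑ i, Polynomial.X ^ d i) * gR.H = (ker hφ).H + g.H := by
    rw [← H_shift]
    ext n
    rw [Polynomial.coeff_add]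
    simp only [coeff_H]
    have := (isGraded_subtype hφ).finrank_add hφ (LinearMap.ker φ).injective_subtype hs
      (LinearMap.exact_subtype_ker_map φ) n
    exact_mod_cast this
  have h9 := congrArg (Polynomial.expand ℤ 2) h8
  rw [map_mul, map_add] at h9
  rw [Hd] at h5
  simp only [defectC, defectE, Hd]
  set P : Polynomial ℤ := ∑ i, Polynomial.X ^ d i
  have h10 : g.H = P * gR.H - (ker hφ).H := by rw [h8]; ring
  constructor
  · rw [h10]
    linear_combination gR.H * h3 - 2 * gR.H * h6 + gR.H * h7
  · linear_combination Polynomial.expand ℤ 2 gR.H * h3 - 2 * Polynomial.expand ℤ 2 gR.H * h4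
      + Polynomial.expand ℤ 2 gR.H * h5 + gR.H * h9

end induction

section main

variable {R : Type u} [CommRing R] [Algebra k R] [FiniteDimensional k R] {gR : Gr k R}

/-- After `m` syzygies the module lives in degrees at least `s + m`, so its defects, which are those of
`X` up to sign, have order at least `s + m`. -/
lemma X_pow_dvd_defect_of_torVan (h2 : (2 : k) ≠ 0) (hR : Compat gR gR)
    (h0 : ∀ r ∈ gR.comp 0, ∃ c, algebraMap k R c = r) (m : ℕ) :
    ∀ (s : ℕ) (X : Type u) [AddCommGroup X] [Module R X] [Module k X] [IsScalarTower k R X]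
      [FiniteDimensional k X] (g : Gr k X) (hg : Compat gR g) (_ : ∀ n < s, g.comp n = ⊥)
      (_ : ∀ n, TorVan R n X X),
      Polynomial.X ^ (s + m) ∣ defectC hg ∧ Polynomial.X ^ (s + m) ∣ defectE hg := by
  induction m with
  | zero => exact fun s X _ _ _ _ _ g hg hs _ => X_pow_dvd_defect hg hs
  | succ m ih =>
    intro s X _ _ _ _ _ g hg hs hX
    obtain ⟨l, d, φ, hsurj, hφ, hker⟩ := exists_presentation hg h0 hs
    have hNX : ∀ n, TorVan R n (LinearMap.ker φ) X := fun n => hX (n + 1) _ φ hsurj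
    have hNN : ∀ n, TorVan R n (LinearMap.ker φ) (LinearMap.ker φ) := fun n =>
      torVan_syzygy_right φ hsurj n _ (hNX (n + 1))
    have hXN : TorVan R 0 X (LinearMap.ker φ) := torVan_syzygy_right φ hsurj 0 _ (hX 1)
    have := Module.Finite.of_injective ((LinearMap.ker φ).subtype.restrictScalars k)
      (LinearMap.ker φ).injective_subtype
    obtain ⟨hC, hE⟩ := ih (s + 1) _ (ker hφ) (compat_ker (compat_shift hR d) hφ) hker hNN
    obtain ⟨eC, eE⟩ := defect_recursion h2 hR hg hφ hsurj (hX 0 _ φ hsurj) (hXN _ φ hsurj)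
    rw [eC, eE, show s + (m + 1) = s + 1 + m by ring]
    exact ⟨hC, (dvd_neg).2 hE⟩

lemma eq_zero_of_X_pow_dvd {p : Polynomial ℤ} (h : ∀ m, Polynomial.X ^ m ∣ p) : p = 0 := by
  ext n
  exact (Polynomial.X_pow_dvd_iff.1 (h (n + 1))) n (Nat.lt_succ_self n)

variable {X : Type u} [AddCommGroup X] [Module R X] [Module k X] [IsScalarTower k R X]
  [FiniteDimensional k X] {g : Gr k X}

/-- Both defects vanish. Evaluating at `T = 1` with `r = dim R = dim X`: the first gives
`dim (X ⊗ X) = r`, the second that the trace of the swap is `r` as well, so there are no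
antisymmetric tensors. -/
lemma swap_eq_self (h2 : (2 : k) ≠ 0) (hR : Compat gR gR)
    (h0 : ∀ r ∈ gR.comp 0, ∃ c, algebraMap k R c = r) (hg : Compat gR g)
    (hX : ∀ n, TorVan R n X X) (hdim : Module.finrank k X = Module.finrank k R)
    (hpos : 0 < Module.finrank k R) (z : X ⊗[R] X) : swap k R X z = z := by
  have key := fun m => X_pow_dvd_defect_of_torVan h2 hR h0 m 0 X g hg (by simp) hX
  simp only [zero_add] at key
  have hC := congrArg (Polynomial.eval 1) (eq_zero_of_X_pow_dvd fun m => (key m).1)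
  have hE := congrArg (Polynomial.eval 1) (eq_zero_of_X_pow_dvd fun m => (key m).2)
  have : FiniteDimensional k (X ⊗[R] X) := by
    have : Module.Finite R X := Module.Finite.of_restrictScalars_finite k R X
    exact Module.Finite.trans R _
  simp only [defectC, defectE, Hd, Polynomial.eval_sub, Polynomial.eval_mul, Polynomial.eval_pow,
    Polynomial.expand_eval, one_pow, eval_one_H, hdim, Polynomial.eval_zero] at hC hE
  have hr : (Module.finrank k R : ℤ) ≠ 0 := by exact_mod_cast hpos.ne'
  have hHa : (Ha hg).eval 1 = 0 := by
    simp only [Polynomial.eval_ofNat] at hE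
    have : (Module.finrank k R : ℤ) * (2 * (Ha hg).eval 1) = 0 := by
      linear_combination hC - hE
    have h4 := (mul_eq_zero.1 this).resolve_left hr
    exact (mul_eq_zero.1 h4).resolve_left two_ne_zero
  have hanti : ∀ n, antiDim ((isGraded_swap hg).res n) = 0 := by
    intro n
    have hsum : (∑ n ∈ range (tensor hg hg).D, (antiDim ((isGraded_swap hg).res n) : ℤ)) = 0 := by
      rw [← hHa, Ha, Polynomial.eval_finsetSum]
      simp
    rcases lt_or_ge n (tensor hg hg).D with hn | hn
    · rw [sum_eq_zero_iff_of_nonneg (fun _ _ => Int.natCast_nonneg _)] at hsum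
      exact_mod_cast hsum n (mem_range.2 hn)
    · have : Subsingleton ((tensor hg hg).comp n) := by
        rw [(tensor hg hg).comp_eq_bot hn]; infer_instance
      exact Module.finrank_zero_of_subsingleton
  have hker : ∀ w : X ⊗[R] X, swap k R X w + w = 0 → w = 0 := by
    intro w hw
    rw [← (tensor hg hg).sum_π w]
    refine sum_eq_zero fun n _ => ?_
    have h1 := Submodule.finrank_eq_zero.1 (hanti n)
    have h2 : (⟨_, (tensor hg hg).π_mem n w⟩ : (tensor hg hg).comp n) ∈
        LinearMap.ker ((isGraded_swap hg).res n + LinearMap.id) := by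
      rw [LinearMap.mem_ker]
      ext
      change swap k R X ((tensor hg hg).π n w) + (tensor hg hg).π n w = 0
      rw [isGraded_swap hg, ← map_add, hw, map_zero]
    rw [h1, Submodule.mem_bot] at h2
    exact congrArg Subtype.val h2
  -- the tensor `z - swap z` is antisymmetric
  have := hker (z - swap k R X z) (by rw [map_sub, swap_swap]; abel)
  exact (sub_eq_zero.1 this).symm

end main

end tensor

end Gr

end Graded

/-! ### Cyclicity -/

section Cyclic

open TensorProduct

variable {k R X : Type*} [Field k] [CommRing R] [Algebra k R] [AddCommGroup X] [Module R X]
  [Module k X] [IsScalarTower k R X]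

/-- If the swap on `X ⊗ X` is the identity, then `X` is cyclic: comparing `a ⊗ b` with `b ⊗ a` in
`V = X / I X` over `R / I = k` shows `f(a) b = f(b) a` for each functional `f`, so `dim V ≤ 1`. -/
lemma exists_span_eq_top_of_comm_eq_self [Module.Finite R X] (I : Ideal R)
    (hI : ∀ r : R, ∃ c : k, r - algebraMap k R c ∈ I) (hn : IsNilpotent I)
    (hsw : ∀ z : X ⊗[R] X, TensorProduct.comm R X X z = z) :
    ∃ x : X, Submodule.span R {x} = ⊤ := by
  have hjac : I ≤ Ideal.jacobson ⊥ := by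
    obtain ⟨n, hn⟩ := hn
    refine le_trans (fun r hr => ?_) Ideal.radical_le_jacobson
    refine ⟨n, ?_⟩
    rw [← Ideal.zero_eq_bot, ← hn]
    exact Ideal.pow_mem_pow hr n
  -- Nakayama's lemma reduces to generating `X / I X` by one element
  have nak : ∀ x : X, (∀ y, y ∈ Submodule.span R {x} ⊔ I • (⊤ : Submodule R X)) →
      Submodule.span R {x} = ⊤ := fun x hx => eq_top_iff.2 <|
    Submodule.le_of_le_smul_of_le_jacobson_bot (Module.Finite.fg_top) hjac fun y _ => hx y
  by_cases htop : I • (⊤ : Submodule R X) = ⊤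
  · exact ⟨0, nak 0 fun y => by rw [htop, sup_top_eq]; trivial⟩
  obtain ⟨x, hx⟩ : ∃ x, x ∉ I • (⊤ : Submodule R X) := by
    by_contra! h
    exact htop (eq_top_iff.2 fun y _ => h y)
  refine ⟨x, nak x fun y => ?_⟩
  let V := X ⧸ I • (⊤ : Submodule R X)
  have hsm : ∀ (r : R) (c : k), r - algebraMap k R c ∈ I → ∀ v : V, r • v = c • v := by
    intro r c hrc v
    obtain ⟨v, rfl⟩ := Submodule.Quotient.mk_surjective _ v
    rw [← Submodule.Quotient.mk_smul, ← Submodule.Quotient.mk_smul, Submodule.Quotient.eq,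
      ← algebraMap_smul R c v, ← sub_smul]
    exact Submodule.smul_mem_smul hrc trivial
  have hx0 : (Submodule.Quotient.mk x : V) ≠ 0 := by
    rwa [Ne, Submodule.Quotient.mk_eq_zero]
  obtain ⟨f, hf⟩ : ∃ f : Module.Dual k V, f (Submodule.Quotient.mk x) ≠ 0 := by
    by_contra! h
    exact hx0 ((Module.forall_dual_apply_eq_zero_iff k _).1 h)
  let mk : X →+ V := (Submodule.mkQ (I • (⊤ : Submodule R X))).toAddMonoidHom
  have hmk : ∀ (r : R) (a : X), mk (r • a) = r • mk a := fun r a => rfl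
  let B : X ⊗[R] X →+ V := TensorProduct.liftAddHom
    (AddMonoidHom.mk' (fun a => AddMonoidHom.mk' (fun b => f (mk a) • mk b)
      (fun b b' => by rw [map_add, smul_add]))
      (fun a a' => by ext b; simp [add_smul]))
    (fun r a b => by
      obtain ⟨c, hc⟩ := hI r
      simp only [AddMonoidHom.mk'_apply]
      rw [hmk, hmk, hsm r c hc, hsm r c hc, map_smul, smul_comm (f _) c, smul_assoc])
  have hB : f (mk x) • mk y = f (mk y) • mk x := by
    have := congrArg B (hsw (x ⊗ₜ y))
    rw [TensorProduct.comm_tmul] at this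
    exact this.symm
  have hy : mk y = mk ((algebraMap k R ((f (mk x))⁻¹ * f (mk y))) • x) := by
    rw [hmk, algebraMap_smul, mul_smul, ← hB]
    exact (inv_smul_smul₀ hf _).symm
  have hmem : y - (algebraMap k R ((f (mk x))⁻¹ * f (mk y))) • x ∈ I • (⊤ : Submodule R X) :=
    (Submodule.Quotient.eq _).1 hy
  rw [← add_sub_cancel ((algebraMap k R ((f (mk x))⁻¹ * f (mk y))) • x) y]
  exact Submodule.add_mem_sup (Submodule.smul_mem _ _ (Submodule.mem_span_singleton_self x)) hmem

end Cyclic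

/-! ### Length and dimension -/

section Length

variable {k : Type*} {R : Type*} [Field k] [CommRing R] [Algebra k R]

/-- If `R = k + I` and `I^n X = 0`, the length of `X` over `R` is its length over `k`: on the
subquotients of the filtration by `I^j X`, submodules over `R` and subspaces over `k` coincide. -/
lemma length_eq_length (I : Ideal R) (hI : ∀ r : R, ∃ c : k, r - algebraMap k R c ∈ I) (n : ℕ) :
    ∀ (X : Type u) [AddCommGroup X] [Module R X] [Module k X] [IsScalarTower k R X],
      I ^ n • (⊤ : Submodule R X) = ⊥ → Module.length R X = Module.length k X := by
  induction n with
  | zero =>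
    intro X _ _ _ _ h
    rw [pow_zero, Ideal.one_eq_top, Submodule.top_smul] at h
    have : Subsingleton X := by
      rw [← Submodule.subsingleton_iff R]
      exact subsingleton_of_bot_eq_top h.symm
    rw [Module.length_eq_zero, Module.length_eq_zero]
  | succ n ih =>
    intro X _ _ _ _ h
    set N := I • (⊤ : Submodule R X) with hN
    have hIN : I ^ n • (⊤ : Submodule R N) = ⊥ := by
      apply Submodule.map_injective_of_injective N.injective_subtype
      rw [Submodule.map_smul'', Submodule.map_top, Submodule.range_subtype, Submodule.map_bot, hN,
        ← Submodule.mul_smul, ← pow_succ, h]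
    have hQ : Module.length R (X ⧸ N) = Module.length k (X ⧸ N) := by
      have hsm : ∀ (r : R) (c : k), r - algebraMap k R c ∈ I → ∀ v : X ⧸ N, r • v = c • v := by
        intro r c hrc v
        obtain ⟨v, rfl⟩ := Submodule.Quotient.mk_surjective _ v
        rw [← Submodule.Quotient.mk_smul, ← Submodule.Quotient.mk_smul, Submodule.Quotient.eq,
          ← algebraMap_smul R c v, ← sub_smul]
        exact Submodule.smul_mem_smul hrc trivial
      let e : Submodule R (X ⧸ N) ≃o Submodule k (X ⧸ N) :=
        { toFun := fun P => P.restrictScalars k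
          invFun := fun P =>
            { P with
              smul_mem' := fun r v hv => by
                obtain ⟨c, hc⟩ := hI r
                rw [hsm r c hc]
                exact P.smul_mem c hv }
          left_inv := fun _ => rfl
          right_inv := fun _ => rfl
          map_rel_iff' := Iff.rfl }
      apply WithBot.coe_injective
      rw [Module.coe_length, Module.coe_length, Order.krullDim_eq_of_orderIso e]
    rw [Module.length_eq_add_of_exact N.subtype N.mkQ N.injective_subtype N.mkQ_surjective
        (LinearMap.exact_subtype_mkQ N),
      Module.length_eq_add_of_exact (N.subtype.restrictScalars k) (N.mkQ.restrictScalars k)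
        N.injective_subtype N.mkQ_surjective (LinearMap.exact_subtype_mkQ N), hQ, ih N hIN]

end Length

/-! ### Projections of an internal grading -/

section FromDecomposition

open Finset

variable {k : Type*} [Field k] {R : Type*} [CommRing R] [Algebra k R] (𝒜 : ℕ → Submodule k R)
  [GradedAlgebra 𝒜] {M : Type*} [AddCommGroup M] [Module R M] [Module k M] [IsScalarTower k R M]
  (ℳ : ℕ → Submodule k M) [DirectSum.Decomposition ℳ]

/-- The projection onto the degree `n` component of a decomposition. -/
def degProj (n : ℕ) : M →ₗ[k] M :=
  (ℳ n).subtype ∘ₗ DirectSum.component k ℕ (fun i => ℳ i) n ∘ₗ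
    (DirectSum.decomposeLinearEquiv ℳ).toLinearMap

lemma degProj_mem (n : ℕ) (x : M) : degProj ℳ n x ∈ ℳ n := Subtype.prop _

lemma degProj_of_mem {i : ℕ} {x : M} (hx : x ∈ ℳ i) (n : ℕ) :
    degProj ℳ n x = if n = i then x else 0 := by
  change (DirectSum.decompose ℳ x n : M) = _
  split_ifs with h
  · subst h
    exact DirectSum.decompose_of_mem_same ℳ hx
  · exact DirectSum.decompose_of_mem_ne ℳ hx (Ne.symm h)

lemma degProj_smul [SetLike.GradedSMul 𝒜 ℳ] (n : ℕ) (r : R) (x : M) :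
    degProj ℳ n (r • x) = ∑ p ∈ antidiagonal n, degProj 𝒜 p.1 r • degProj ℳ p.2 x := by
  induction r using DirectSum.Decomposition.inductionOn 𝒜 with
  | zero => simp
  | add r r' hr hr' => simp only [add_smul, map_add, hr, hr', sum_add_distrib]
  | @homogeneous i r =>
    induction x using DirectSum.Decomposition.inductionOn ℳ with
    | zero => simp
    | add x x' hx hx' => simp only [smul_add, map_add, hx, hx', sum_add_distrib]
    | @homogeneous j x =>
      have hrx : (r : R) • (x : M) ∈ ℳ (i + j) := SetLike.GradedSMul.smul_mem r.2 x.2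
      simp only [degProj_of_mem ℳ hrx, degProj_of_mem 𝒜 r.2, degProj_of_mem ℳ x.2]
      split_ifs with h
      · rw [sum_eq_single (i, j)]
        · simp
        · rintro ⟨a, b⟩ - hne
          by_cases ha : a = i
          · subst ha
            rw [if_neg (c := (a, b).2 = j) (fun hb => hne (Prod.ext rfl hb)), smul_zero]
          · rw [if_neg ha, zero_smul]
        · intro h'
          exact absurd (HasAntidiagonal.mem_antidiagonal.2 h.symm) h'
      · refine (sum_eq_zero fun p hp => ?_).symm
        rw [HasAntidiagonal.mem_antidiagonal] at hp
        by_cases ha : p.1 = i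
        · rw [if_neg (c := p.2 = j) (by omega), smul_zero]
        · rw [if_neg ha, zero_smul]

/-- The submodule of elements whose components in degrees below `n` vanish. -/
def degGE [SetLike.GradedSMul 𝒜 ℳ] (n : ℕ) : Submodule R M where
  carrier := {x | ∀ m < n, degProj ℳ m x = 0}
  zero_mem' := fun m _ => map_zero _
  add_mem' := fun {x y} hx hy m hm => by rw [map_add, hx m hm, hy m hm, add_zero]
  smul_mem' := fun r x hx m hm => by
    rw [degProj_smul 𝒜]
    refine sum_eq_zero fun p hp => ?_
    rw [HasAntidiagonal.mem_antidiagonal] at hp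
    rw [hx p.2 (by omega), smul_zero]

/-- A graded Artinian module is concentrated in finitely many degrees, as the descending chain of the
submodules `degGE` stabilizes. -/
lemma exists_forall_eq_bot [SetLike.GradedSMul 𝒜 ℳ] [IsArtinian R M] :
    ∃ D, ∀ n, D ≤ n → ℳ n = ⊥ := by
  let F : ℕ →o (Submodule R M)ᵒᵈ :=
    ⟨fun n => OrderDual.toDual (degGE 𝒜 ℳ n), fun a b hab x hx m hm => hx m (by omega)⟩
  obtain ⟨D, hD⟩ := IsArtinian.monotone_stabilizes F
  refine ⟨D, fun n hn => ?_⟩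
  have h : degGE 𝒜 ℳ n = degGE 𝒜 ℳ (n + 1) := (hD n hn).symm.trans (hD (n + 1) (by omega))
  rw [eq_bot_iff]
  intro x hx
  have h1 : x ∈ degGE 𝒜 ℳ n := fun m hm => by rw [degProj_of_mem ℳ hx, if_neg hm.ne]
  rw [h] at h1
  have := h1 n (Nat.lt_succ_self n)
  rwa [degProj_of_mem ℳ hx, if_pos rfl] at this

/-- A decomposition bounded above, as a grading by projections. -/
def grOfDecomposition (D : ℕ) (hD : ∀ n, D ≤ n → ℳ n = ⊥) : Gr k M where
  π := degProj ℳ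
  D := D
  π_eq_zero n hn := by
    ext x
    have := degProj_mem ℳ n x
    rwa [hD n hn, Submodule.mem_bot] at this
  sum_π x := by
    induction x using DirectSum.Decomposition.inductionOn ℳ with
    | zero => simp
    | add x y hx hy => simp only [map_add, sum_add_distrib, hx, hy]
    | @homogeneous i x =>
      simp only [degProj_of_mem ℳ x.2, sum_ite_eq', mem_range]
      split_ifs with h
      · rfl
      · have hx : (x : M) ∈ (⊥ : Submodule k M) := hD i (not_lt.1 h) ▸ x.2
        exact ((Submodule.mem_bot k).1 hx).symm
  π_π m n x := degProj_of_mem ℳ (degProj_mem ℳ n x) m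

/-- Powers of the irrelevant ideal `R_{>0}`. -/
lemma degGE_one_pow_le (n : ℕ) : (degGE 𝒜 𝒜 1 : Ideal R) ^ n ≤ degGE 𝒜 𝒜 n := by
  induction n with
  | zero => exact fun r _ m hm => absurd hm (Nat.not_lt_zero m)
  | succ n ih =>
    rw [pow_succ]
    refine Ideal.mul_le.2 fun r hr s hs m hm => ?_
    rw [← smul_eq_mul, degProj_smul 𝒜 𝒜]
    refine sum_eq_zero fun p hp => ?_
    rw [HasAntidiagonal.mem_antidiagonal] at hp
    rcases Nat.eq_zero_or_pos p.2 with h | h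
    · rw [h, hs 0 Nat.one_pos, smul_zero]
    · rw [ih hr p.1 (by omega), zero_smul]

end FromDecomposition

/-! ### The isomorphism -/

theorem stmt_9 (k : Type u) [Field k] (hchar : ringChar k ≠ 2)
    (R : Type u) [CommRing R] [Algebra k R] [IsNoetherianRing R] [IsArtinianRing R]
    (𝒜 : ℕ → Submodule k R) [GradedAlgebra 𝒜] (h0 : 𝒜 0 = 1)
    (M : Type u) [AddCommGroup M] [Module R M] [Module k M] [IsScalarTower k R M]
    [Module.Finite R M]
    (ℳ : ℕ → Submodule k M) [DirectSum.Decomposition ℳ] [SetLike.GradedSMul 𝒜 ℳ]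
    (hlen : Order.krullDim (Submodule R M) = Order.krullDim (Submodule R R))
    (htor : ∀ i : ℕ, 0 < i →
      IsZero (((Tor (ModuleCat.{u} R) i).obj (ModuleCat.of R M)).obj (ModuleCat.of R M))) :
    Nonempty (M ≃ₗ[R] R) := by
  rcases subsingleton_or_nontrivial R with hR | hR
  · have := Module.subsingleton R M
    exact ⟨0⟩
  obtain ⟨D, hD⟩ := exists_forall_eq_bot 𝒜 𝒜
  obtain ⟨E, hE⟩ := exists_forall_eq_bot 𝒜 ℳ
  let gR := grOfDecomposition 𝒜 D hD
  let g := grOfDecomposition ℳ E hE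
  have cR : Gr.Compat gR gR := fun n r x => degProj_smul 𝒜 𝒜 n r x
  have cM : Gr.Compat gR g := fun n r x => degProj_smul 𝒜 ℳ n r x
  have h𝒜 : ∀ r ∈ 𝒜 0, ∃ c, algebraMap k R c = r := fun r hr => by
    rwa [h0, Submodule.mem_one] at hr
  let I : Ideal R := degGE 𝒜 𝒜 1
  have hI : ∀ r : R, ∃ c : k, r - algebraMap k R c ∈ I := by
    intro r
    obtain ⟨c, hc⟩ := h𝒜 _ (degProj_mem 𝒜 0 r)
    refine ⟨c, fun m hm => ?_⟩
    obtain rfl : m = 0 := by omega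
    rw [hc, map_sub, degProj_of_mem 𝒜 (degProj_mem 𝒜 0 r), if_pos rfl, sub_self]
  have hnil : I ^ D = ⊥ := by
    rw [eq_bot_iff]
    intro r hr
    rw [Submodule.mem_bot, ← gR.sum_π r]
    exact Finset.sum_eq_zero fun n hn => degGE_one_pow_le 𝒜 D hr n (Finset.mem_range.1 hn)
  -- lengths over `R` are dimensions over `k`
  have lR : Module.length R R = Module.length k R :=
    length_eq_length I hI D R (by rw [hnil, Submodule.bot_smul])
  have lM : Module.length R M = Module.length k M :=
    length_eq_length I hI D M (by rw [hnil, Submodule.bot_smul])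
  have fR : FiniteDimensional k R := by
    have h1 : Module.length k R ≠ ⊤ := lR ▸ Module.length_ne_top
    have := (isFiniteLength_iff_isNoetherian_isArtinian.1 (Module.length_ne_top_iff.1 h1)).1
    exact Module.IsNoetherian.finite k R
  have fM : FiniteDimensional k M := Module.Finite.trans R M
  have hdim : Module.finrank k M = Module.finrank k R := by
    have h1 : Module.length R M = Module.length R R := by
      apply WithBot.coe_injective
      rw [Module.coe_length, Module.coe_length, hlen]
    rw [lR, lM, Module.length_eq_finrank, Module.length_eq_finrank] at h1
    exact_mod_cast h1
  have h2 : (2 : k) ≠ 0 := Ring.two_ne_zero hchar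
  have hsw := Gr.swap_eq_self h2 cR (fun r hr => h𝒜 r (by
      rw [← Gr.mem_comp.1 hr]
      exact degProj_mem 𝒜 0 r)) cM (torVan_of_isZero_Tor htor) hdim Module.finrank_pos
  obtain ⟨x, hx⟩ := exists_span_eq_top_of_comm_eq_self I hI ⟨D, hnil⟩ hsw
  have hsurj : Function.Surjective (LinearMap.toSpanSingleton R M x) := by
    rw [← LinearMap.range_eq_top, LinearMap.range_toSpanSingleton, hx]
  have hinj : Function.Injective (LinearMap.toSpanSingleton R M x) :=
    (LinearMap.injective_iff_surjective_of_finrank_eq_finrank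
      (f := (LinearMap.toSpanSingleton R M x).restrictScalars k) hdim.symm).2 hsurj
  exact ⟨(LinearEquiv.ofBijective _ ⟨hinj, hsurj⟩).symm⟩
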